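/- arXiv:2205.09686 — 3 statements merged into one kernel-verified Lean document; each statement's English description precedes it below -/
import Mathlib

section
/- For every integer n ≥ 1, the number of Dyck paths D of semilength n with L(D) = 1 equals the (n-1)-st Motzkin number, i.e. |D_n^1| = M_{n-1}. -/
/-- A Dyck path of semilength `n`, encoded as a word on `Bool`
(`true` = up step `u`, `false` = down step `d`). -/
def IsDyckWord (n : ℕ) (w : List Bool) : Prop :=
  w.length = 2 * n ∧ w.count true = n ∧ w.count false = n ∧
    ∀ p : List Bool, p <+: w → p.count false ≤ p.count true

/-- The (0-based) indices of the up steps of `w`. -/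
def upIdxs (w : List Bool) : List ℕ := w.findIdxs (· == true)

/-- The (0-based) indices of the down steps of `w`. -/
def downIdxs (w : List Bool) : List ℕ := w.findIdxs (· == false)

/-- `rStat w i` is the number of `d`'s strictly between the `i`-th and the
`(i+1)`-st `u` of `w` (with `i` 1-indexed). -/
def rStat (w : List Bool) (i : ℕ) : ℕ :=
  ((w.take ((upIdxs w).getD i 0)).drop ((upIdxs w).getD (i - 1) 0 + 1)).count false

/-- `sStat w i` is the number of `u`'s strictly between the `i`-th and the
`(i+1)`-st `d` of `w` (with `i` 1-indexed). -/
def sStat (w : List Bool) (i : ℕ) : ℕ :=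
  ((w.take ((downIdxs w).getD i 0)).drop ((downIdxs w).getD (i - 1) 0 + 1)).count true

/-- The statistic `L(D) = ∏_{i=1}^{n-1} C(r_i + s_i, r_i)` of a Dyck path of semilength `n`. -/
def LStat (n : ℕ) (w : List Bool) : ℕ :=
  ∏ i ∈ Finset.Icc 1 (n - 1), Nat.choose (rStat w i + sStat w i) (rStat w i)

/-- `dyckL n k` = the set `𝒟ₙᵏ` of Dyck paths of semilength `n` with `L(D) = k`. -/
def dyckL (n k : ℕ) : Set (List Bool) := {w | IsDyckWord n w ∧ LStat n w = k}

/-- A Motzkin path, encoded as a word on `Option Bool`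
(`some true` = up, `some false` = down, `none` = horizontal). -/
def IsMotzkinWord (w : List (Option Bool)) : Prop :=
  w.count (some false) = w.count (some true) ∧
    ∀ p : List (Option Bool), p <+: w → p.count (some false) ≤ p.count (some true)

/-- `motzkin n` = the `n`-th Motzkin number `Mₙ`, the number of Motzkin paths of length `n`. -/
noncomputable def motzkin (n : ℕ) : ℕ :=
  {w : List (Option Bool) | w.length = n ∧ IsMotzkinWord w}.ncard

/-- The Motzkin ballot number `T_{n,k}`: the number of Motzkin paths of length `n`
whose first down step is in position `k` (1-indexed); by convention `T_{k-1,k} = 1`,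
counting the path of `k-1` horizontal steps. -/
noncomputable def motzkinBallot (n k : ℕ) : ℕ :=
  if n + 1 = k then 1
  else
    {w : List (Option Bool) | w.length = n ∧ IsMotzkinWord w ∧
      w.getD (k - 1) none = some false ∧ ∀ j < k - 1, w.getD j none ≠ some false}.ncard

/-- Motzkin numbers with integer index: `Mᵢ = 0` for `i < 0`. -/
noncomputable def motzkinZ (i : ℤ) : ℤ := if 0 ≤ i then (motzkin i.toNat : ℤ) else 0

/-- Motzkin ballot numbers with integer first index: `T_{n,k} = 0` for `n < 0`. -/
noncomputable def motzkinBallotZ (n : ℤ) (k : ℕ) : ℤ :=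
  if 0 ≤ n then (motzkinBallot n.toNat k : ℤ) else 0

/-- The set of returns of a Dyck path `w` of semilength `n`:
indices `1 ≤ k ≤ n` such that the path touches the `x`-axis after `2k` steps. -/
def returns (n : ℕ) (w : List Bool) : Finset ℕ :=
  (Finset.Icc 1 n).filter fun k => (w.take (2 * k)).count false = (w.take (2 * k)).count true

/-- `dyckRS n r s` = the set `𝒟ₙ^{r,s}` of Dyck paths of semilength `n` having exactly one
index `i` with `rᵢ > 0` and `sᵢ > 0`, and such that at that index `rᵢ = r` and `sᵢ = s`. -/
def dyckRS (n r s : ℕ) : Set (List Bool) :=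
  {w | IsDyckWord n w ∧ ∃ i ∈ Finset.Icc 1 (n - 1),
    (0 < rStat w i ∧ 0 < sStat w i) ∧ rStat w i = r ∧ sStat w i = s ∧
      ∀ j ∈ Finset.Icc 1 (n - 1), 0 < rStat w j ∧ 0 < sStat w j → j = i}

/-- `twoStars n w k₁ k₂` says that `k₁ < k₂` are exactly the two indices `i` of `w`
with `rᵢ > 0` and `sᵢ > 0`. -/
def twoStars (n : ℕ) (w : List Bool) (k₁ k₂ : ℕ) : Prop :=
  k₁ ∈ Finset.Icc 1 (n - 1) ∧ k₂ ∈ Finset.Icc 1 (n - 1) ∧ k₁ < k₂ ∧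
    (0 < rStat w k₁ ∧ 0 < sStat w k₁) ∧ (0 < rStat w k₂ ∧ 0 < sStat w k₂) ∧
    ∀ j ∈ Finset.Icc 1 (n - 1), 0 < rStat w j ∧ 0 < sStat w j → j = k₁ ∨ j = k₂

/-- `xStat w k` = the number of indices `i < k` with `rᵢ = 0` and `sᵢ > 0`. -/
def xStat (w : List Bool) (k : ℕ) : ℕ :=
  ((Finset.Ico 1 k).filter fun i => rStat w i = 0 ∧ 0 < sStat w i).card

/-- `yStat w k` = the number of indices `i < k` with `rᵢ > 0` and `sᵢ = 0`. -/
def yStat (w : List Bool) (k : ℕ) : ℕ :=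
  ((Finset.Ico 1 k).filter fun i => 0 < rStat w i ∧ sStat w i = 0).card

/-- The generating function `m(x) = Σ Mₙ xⁿ` of the Motzkin numbers, over `ℚ`. -/
noncomputable def motzkinGF : PowerSeries ℚ := PowerSeries.mk fun n => (motzkin n : ℚ)

/-- For each occurrence of the letter `c` in `w`, in order, whether it is immediately followed
by the opposite letter. -/
def switches (c : Bool) : List Bool → List Bool
  | [] => []
  | a :: w => if a = c then (w.head? == some (!c)) :: switches c w else switches c w

lemma switches_cons (c a : Bool) (w : List Bool) : switches c (a :: w) =
    if a = c then (w.head? == some (!c)) :: switches c w else switches c w := rfl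

lemma length_switches (c : Bool) (w : List Bool) : (switches c w).length = w.count c := by
  induction w with
  | nil => rfl
  | cons a w ih => by_cases h : a = c <;> simp [switches, h, ih]

/-- The number of letters `!c` strictly between the occurrences of `c` number `i` and `i + 1`
(counted from `0`) in `w`. -/
def gapCount (c : Bool) (w : List Bool) (i : ℕ) : ℕ :=
  ((w.take ((w.findIdxs (· == c)).getD (i + 1) 0)).drop
    ((w.findIdxs (· == c)).getD i 0 + 1)).count (!c)

lemma rStat_succ (w : List Bool) (i : ℕ) : rStat w (i + 1) = gapCount true w i := rfl

lemma sStat_succ (w : List Bool) (i : ℕ) : sStat w (i + 1) = gapCount false w i := rfl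

lemma getD_findIdxs_one (c : Bool) (w : List Bool) (i : ℕ) (hi : i < w.count c) :
    (w.findIdxs (· == c) 1).getD i 0 = (w.findIdxs (· == c)).getD i 0 + 1 := by
  have h : i < (w.findIdxs (· == c)).length := by simpa [List.count] using hi
  rw [List.findIdxs_start]
  simp [List.getD_eq_getElem?_getD, List.getElem?_eq_getElem h]

lemma gapCount_pos_iff (c : Bool) (w : List Bool) (i : ℕ) (hi : i + 1 < w.count c) :
    0 < gapCount c w i ↔ (switches c w)[i]? = some true := by
  induction w generalizing i with
  | nil => simp at hi
  | cons a w ih =>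
    by_cases h : a = c
    · subst h
      simp only [List.count_cons_self, add_lt_add_iff_right] at hi
      cases i with
      | zero =>
        have h1 := getD_findIdxs_one a w 0 hi
        simp only [gapCount, List.findIdxs_cons, beq_self_eq_true, if_true, zero_add,
          List.getD_cons_succ, List.getD_cons_zero, h1, switches, List.take_succ_cons,
          List.drop_succ_cons, List.drop_zero, List.getElem?_cons_zero, Option.some.injEq,
          beq_iff_eq]
        cases w with
        | nil => simp at hi
        | cons b w =>
          by_cases hb : b = a
          · subst hb
            simp
          · obtain rfl : b = !a := by cases a <;> cases b <;> simp_all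
            have h2 := getD_findIdxs_one a w 0 (by simpa using hi)
            simp only [List.findIdxs_cons, beq_iff_eq, hb, if_false, zero_add, h2,
              List.take_succ_cons]
            simp
      | succ i =>
        have h1 := getD_findIdxs_one a w i (by omega)
        have h2 := getD_findIdxs_one a w (i + 1) hi
        have key : gapCount a (a :: w) (i + 1) = gapCount a w i := by
          simp only [gapCount, List.findIdxs_cons, beq_self_eq_true, if_true, zero_add,
            List.getD_cons_succ, h1, h2, List.take_succ_cons, List.drop_succ_cons]
        rw [key, ih i hi]
        simp [switches]
    · have hi' : i + 1 < w.count c := by simpa [h] using hi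
      have h1 := getD_findIdxs_one c w i (by omega)
      have h2 := getD_findIdxs_one c w (i + 1) hi'
      have hb : (a == c) = false := by simpa using h
      have key : gapCount c (a :: w) i = gapCount c w i := by
        simp only [gapCount, List.findIdxs_cons, hb, zero_add, Bool.false_eq_true, if_false,
          h1, h2, List.take_succ_cons, List.drop_succ_cons]
      rw [key, ih i hi']
      simp [switches, h]

/-- A word is determined by its first letter and the switches at its two kinds of letters. -/
lemma eq_of_switches_eq (v w : List Bool) (h : v.head? = w.head?)
    (hu : switches true v = switches true w) (hd : switches false v = switches false w) :
    v = w := by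
  induction v generalizing w with
  | nil => cases w <;> simp_all
  | cons a v ih =>
    cases w with
    | nil => simp at h
    | cons b w =>
      obtain rfl : a = b := by simpa using h
      have hlen : v.length = w.length := by
        have e1 := congrArg List.length hu
        have e2 := congrArg List.length hd
        simp only [length_switches] at e1 e2
        have e3 := List.count_true_add_count_false (a :: v)
        have e4 := List.count_true_add_count_false (a :: w)
        simp only [List.length_cons] at e3 e4
        omega
      rw [switches_cons, switches_cons true a w] at hu
      rw [switches_cons, switches_cons false a w] at hd
      have hne : v.head? = none ↔ w.head? = none := by
        simp only [List.head?_eq_none_iff, ← List.length_eq_zero_iff, hlen]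
      have hhead : (v.head? == some (!a)) = (w.head? == some (!a)) := by
        cases a
        · simpa using (List.cons.inj hd).1
        · simpa using (List.cons.inj hu).1
      congr 1
      refine ih w ?_ ?_ ?_
      · rcases hv : v.head? with _ | _ | _ <;> rcases hw : w.head? with _ | _ | _ <;>
          cases a <;> simp_all
      · cases a <;> simp_all
      · cases a <;> simp_all

/-- The words ending in `d` realise every compatible pair of switch sequences. -/
lemma exists_switches_eq (N : ℕ) (c : Bool) (X Y : List Bool) (hN : X.length + Y.length = N)
    (hX : X.getLast? ≠ some false) (hY : Y.getLast? = some false)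
    (hcount : X.count true = Y.count true + c.toNat) :
    ∃ w : List Bool, w.head? = some c ∧ switches true w = X ∧ switches false w = Y := by
  induction N generalizing c X Y with
  | zero => cases Y <;> simp_all
  | succ N ih =>
    cases c with
    | true =>
      cases X with
      | nil => simp at hcount
      | cons x X =>
        have hX' : X.getLast? ≠ some false := by
          cases X <;> simp_all
        obtain ⟨w, h1, h2, h3⟩ := ih (!x) X Y (by simp at hN; omega) hX' hY
          (by cases x <;> simp_all)
        exact ⟨true :: w, rfl, by cases x <;> simp [switches, h1, h2],
          by simp [switches, h3]⟩
    | false =>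
      cases Y with
      | nil => simp at hY
      | cons y Y =>
        cases Y with
        | nil =>
          obtain rfl : y = false := by simpa using hY
          have : X = [] := by
            rcases List.eq_nil_or_concat X with h | ⟨X', b, rfl⟩
            · exact h
            · cases b <;> simp_all
          exact ⟨[false], by simp [switches, this]⟩
        | cons z Y =>
          obtain ⟨w, h1, h2, h3⟩ := ih y X (z :: Y) (by simp at hN ⊢; omega) hX
            (by simpa using hY) (by cases y <;> simp_all)
          exact ⟨false :: w, rfl, by simp [switches, h2],
            by cases y <;> simp [switches, h1, h3]⟩

/-- The switch sequences of a word ending in `d`. -/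
lemma switches_of_getLast (w : List Bool) (c : Bool) (hc : w.head? = some c)
    (hw : w.getLast? = some false) :
    (switches true w).getLast? ≠ some false ∧ (switches false w).getLast? = some false ∧
      (switches true w).count true = (switches false w).count true + c.toNat := by
  induction w generalizing c with
  | nil => simp at hc
  | cons a w ih =>
    obtain rfl : a = c := by simpa using hc
    cases w with
    | nil =>
      obtain rfl : a = false := by simpa using hw
      simp [switches]
    | cons b w =>
      obtain ⟨h1, h2, h3⟩ := ih b rfl (by simpa using hw)
      cases a with
      | true =>
        refine ⟨?_, by simpa [switches] using h2, ?_⟩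
        · rw [switches_cons, if_pos rfl, List.getLast?_cons]
          cases b with
          | true =>
            rw [switches_cons, if_pos rfl, List.getLast?_cons] at h1 ⊢
            simpa using h1
          | false => cases hq : (switches true (false :: w)).getLast? <;> simp_all
        · cases b <;> simp_all [switches]
      | false =>
        refine ⟨by simpa [switches] using h1, ?_, ?_⟩
        · have : switches false (false :: b :: w) =
            ((b :: w).head? == some true) :: switches false (b :: w) := rfl
          rw [this, List.getLast?_cons, h2]
          rfl
        · cases b <;> simp_all [switches]

/-- The nonnegativity of a path from height `h` to height `0`, read off its switches. -/
lemma prefix_iff_switches (w : List Bool) (h : ℕ) (hw : h + w.count true = w.count false) :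
    (∀ p : List Bool, p <+: w → p.count false ≤ p.count true + h) ↔
      ∀ t < (switches true w).length,
        (w.head? == some false).toNat + ((switches true w).take t).count true ≤
          ((switches false w).take (t + h)).count true := by
  induction w generalizing h with
  | nil => simp [switches]
  | cons a w ih =>
    cases a with
    | true =>
      have hw' : h + 1 + w.count true = w.count false := by
        simp at hw; omega
      have hne : w ≠ [] := by rintro rfl; simp at hw'
      have e1 : (∀ p : List Bool, p <+: true :: w → p.count false ≤ p.count true + h) ↔
          ∀ p : List Bool, p <+: w → p.count false ≤ p.count true + (h + 1) := by
        constructor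
        · intro H p hp
          have := H (true :: p) (by simpa using hp)
          simp at this; omega
        · intro H p hp
          rcases List.prefix_cons_iff.1 hp with rfl | ⟨q, rfl, hq⟩
          · simp
          · have := H q hq
            simp; omega
      rw [e1, ih (h + 1) hw']
      have e2 : switches false (true :: w) = switches false w := by simp [switches]
      have e3 : switches true (true :: w) = (w.head? == some false) :: switches true w := by
        simp [switches]
      rw [e2, e3]
      have e4 : ∀ s, (((w.head? == some false) :: switches true w).take (s + 1)).count true =
          (w.head? == some false).toNat + ((switches true w).take s).count true := by
        intro s
        cases w.head? == some false <;> simp [add_comm]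
      constructor
      · intro H t ht
        cases t with
        | zero => simp
        | succ s =>
          have := H s (by simpa using ht)
          rw [e4, show s + 1 + h = s + (h + 1) by omega]
          simpa using this
      · intro H s hs
        have := H (s + 1) (by simpa using hs)
        rw [e4, show s + 1 + h = s + (h + 1) by omega] at this
        simpa using this
    | false =>
      have hw' : h + w.count true = w.count false + 1 := by
        simpa using hw
      have e2 : switches true (false :: w) = switches true w := by simp [switches]
      have e3 : switches false (false :: w) = (w.head? == some true) :: switches false w := by
        simp [switches]
      rw [e2, e3]
      cases h with
      | zero =>
        refine iff_of_false (fun H => ?_) (fun H => ?_)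
        · have := H [false] (by simp)
          simp at this
        · have := H 0 (by rw [length_switches]; omega)
          simp at this
      | succ h =>
        have e1 : (∀ p : List Bool, p <+: false :: w → p.count false ≤ p.count true + (h + 1)) ↔
            ∀ p : List Bool, p <+: w → p.count false ≤ p.count true + h := by
          constructor
          · intro H p hp
            have := H (false :: p) (by simpa using hp)
            simp at this; omega
          · intro H p hp
            rcases List.prefix_cons_iff.1 hp with rfl | ⟨q, rfl, hq⟩
            · simp
            · have := H q hq
              simp; omega
        rw [e1, ih h (by omega)]
        refine forall₂_congr fun t ht => ?_
        rw [← add_assoc, List.take_succ_cons]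
        cases w with
        | nil => simp [switches] at ht
        | cons b w =>
          cases b
          · simp
          · simp
            omega

/-- The switch sequence at up steps encoded by a Motzkin word. -/
def upSwitches (m : List (Option Bool)) : List Bool := m.map (· == some false) ++ [true]

/-- The switch sequence at down steps encoded by a Motzkin word. -/
def downSwitches (m : List (Option Bool)) : List Bool := m.map (· == some true) ++ [false]

/-- The Dyck word `w` and the Motzkin word `m` correspond to each other: the `i`-th step of `m`
is a down step iff the `i`-th `u` of `w` is followed by `d`, and an up step iff the `i`-th `d` of
`w` is followed by `u`. -/
def Corresponds (w : List Bool) (m : List (Option Bool)) : Prop :=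
  w.head? = some true ∧ switches true w = upSwitches m ∧ switches false w = downSwitches m

lemma count_true_map_beq (m : List (Option Bool)) (a : Option Bool) :
    (m.map (· == a)).count true = m.count a := by
  induction m with
  | nil => rfl
  | cons x m ih => by_cases h : x = a <;> simp [h, ih]

lemma Corresponds.left_unique {v w : List Bool} {m : List (Option Bool)}
    (hv : Corresponds v m) (hw : Corresponds w m) : v = w :=
  eq_of_switches_eq v w (hv.1.trans hw.1.symm) (hv.2.1.trans hw.2.1.symm)
    (hv.2.2.trans hw.2.2.symm)

lemma Corresponds.right_unique {w : List Bool} {m m' : List (Option Bool)}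
    (h : Corresponds w m) (h' : Corresponds w m') : m = m' := by
  have e1 := h.2.1.symm.trans h'.2.1
  have e2 := h.2.2.symm.trans h'.2.2
  simp only [upSwitches, downSwitches, List.append_cancel_right_eq] at e1 e2
  clear h h'
  induction m generalizing m' with
  | nil => cases m' <;> simp_all
  | cons a m ih =>
    cases m' with
    | nil => simp at e1
    | cons b m' =>
      simp only [List.map_cons, List.cons.injEq] at e1 e2
      rw [ih e1.2 e2.2]
      congr 1
      rcases a with _ | _ | _ <;> rcases b with _ | _ | _ <;> simp_all

lemma IsMotzkinWord.exists_corresponds {m : List (Option Bool)} (hm : IsMotzkinWord m) :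
    ∃ w, Corresponds w m :=
  exists_switches_eq _ true (upSwitches m) (downSwitches m) rfl (by simp [upSwitches])
    (by simp [downSwitches])
    (by simp [upSwitches, downSwitches, count_true_map_beq, hm.1])

lemma LStat_eq_one_iff (n : ℕ) (w : List Bool) (hu : w.count true = n)
    (hd : w.count false = n) :
    LStat n w = 1 ↔ ∀ i, i + 1 < n →
      ¬((switches true w)[i]? = some true ∧ (switches false w)[i]? = some true) := by
  have key : ∀ i, i + 1 < n →
      (Nat.choose (rStat w (i + 1) + sStat w (i + 1)) (rStat w (i + 1)) = 1 ↔
        ¬((switches true w)[i]? = some true ∧ (switches false w)[i]? = some true)) := by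
    intro i hi
    rw [← gapCount_pos_iff true w i (by omega), ← gapCount_pos_iff false w i (by omega),
      Nat.choose_eq_one_iff, rStat_succ, sStat_succ]
    omega
  rw [LStat, Finset.prod_eq_one_iff]
  constructor
  · intro H i hi
    exact (key i hi).1 (H (i + 1) (Finset.mem_Icc.2 (by omega)))
  · intro H i hi
    obtain ⟨h1, h2⟩ := Finset.mem_Icc.1 hi
    obtain ⟨i, rfl⟩ := Nat.exists_eq_add_of_le' h1
    exact (key i (by omega)).2 (H i (by omega))

lemma IsDyckWord.head?_eq {n : ℕ} {w : List Bool} (hn : 1 ≤ n) (hw : IsDyckWord n w) :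
    w.head? = some true := by
  obtain ⟨h1, -, -, h4⟩ := hw
  rcases w with _ | ⟨_ | _, w⟩
  · simp at h1; omega
  · have := h4 [false] (by simp)
    simp at this
  · rfl

lemma IsDyckWord.getLast?_eq {n : ℕ} {w : List Bool} (hn : 1 ≤ n) (hw : IsDyckWord n w) :
    w.getLast? = some false := by
  obtain ⟨h1, h2, h3, h4⟩ := hw
  rcases List.eq_nil_or_concat w with rfl | ⟨v, b, rfl⟩
  · simp at h1; omega
  · cases b
    · simp
    · have := h4 v (by simp)
      simp at h2 h3
      omega

lemma exists_corresponds_of_mem_dyckL {n : ℕ} {w : List Bool} (hn : 1 ≤ n)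
    (hw : w ∈ dyckL n 1) : ∃ m : List (Option Bool), m.length = n - 1 ∧ Corresponds w m := by
  obtain ⟨hD, hL⟩ := hw
  have hhead := hD.head?_eq hn
  obtain ⟨h1, h2, h3⟩ := switches_of_getLast w true hhead (hD.getLast?_eq hn)
  rw [LStat_eq_one_iff n w hD.2.1 hD.2.2.1] at hL
  have lu := length_switches true w
  have ld := length_switches false w
  rw [hD.2.1] at lu
  rw [hD.2.2.1] at ld
  generalize hX : switches true w = X at *
  generalize hY : switches false w = Y at *
  rcases List.eq_nil_or_concat X with rfl | ⟨X, x, rfl⟩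
  · simp at lu; omega
  rcases List.eq_nil_or_concat Y with rfl | ⟨Y, y, rfl⟩
  · simp at ld; omega
  obtain rfl : x = true := by simpa using h1
  obtain rfl : y = false := by simpa using h2
  simp only [List.concat_eq_append, List.length_append, List.length_singleton] at hX hY hL lu ld
  refine ⟨List.zipWith (fun x y => if y then some true else if x then some false else none) X Y,
    by simp; omega, hhead, ?_, ?_⟩
  · rw [hX, upSwitches]
    congr 1
    refine List.ext_getElem (by simp; omega) fun i hi _ => ?_
    have := hL i (by omega)
    have hi' : i < Y.length := by omega
    simp only [List.getElem?_append_left hi, List.getElem?_append_left hi',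
      List.getElem?_eq_getElem hi, List.getElem?_eq_getElem hi'] at this
    simp only [List.getElem_map, List.getElem_zipWith]
    cases hx : X[i] <;> cases hy : Y[i] <;> simp_all
  · rw [hY, downSwitches]
    congr 1
    refine List.ext_getElem (by simp; omega) fun i hi _ => ?_
    simp only [List.getElem_map, List.getElem_zipWith]
    split_ifs <;> simp_all

lemma Corresponds.mem_dyckL_iff {n : ℕ} {w : List Bool} {m : List (Option Bool)}
    (h : Corresponds w m) (hm : m.length + 1 = n) : w ∈ dyckL n 1 ↔ IsMotzkinWord m := by
  obtain ⟨hhead, hX, hY⟩ := h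
  have hu : w.count true = n := by
    rw [← length_switches, hX]; simp [upSwitches, hm]
  have hd : w.count false = n := by
    rw [← length_switches, hY]; simp [downSwitches, hm]
  have hlen : w.length = 2 * n := by
    rw [← List.count_true_add_count_false w]; omega
  have hL : LStat n w = 1 := by
    rw [LStat_eq_one_iff n w hu hd, hX, hY]
    intro i hi
    have hi' : i < m.length := by omega
    simp only [upSwitches, downSwitches]
    rw [List.getElem?_append_left (by simpa), List.getElem?_append_left (by simpa)]
    simp only [List.getElem?_map, List.getElem?_eq_getElem hi']
    rcases m[i] with _ | _ | _ <;> simp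
  have hpre : (∀ p : List Bool, p <+: w → p.count false ≤ p.count true) ↔
      ∀ p : List (Option Bool), p <+: m → p.count (some false) ≤ p.count (some true) := by
    have := prefix_iff_switches w 0 (by omega)
    simp only [add_zero] at this
    rw [this, hhead, hX, hY]
    have e : ∀ t ≤ m.length,
        ((upSwitches m).take t).count true = (m.take t).count (some false) ∧
        ((downSwitches m).take t).count true = (m.take t).count (some true) := by
      intro t ht
      simp only [upSwitches, downSwitches]
      rw [List.take_append_of_le_length (by simpa), List.take_append_of_le_length (by simpa),
        ← List.map_take, ← List.map_take, count_true_map_beq, count_true_map_beq]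
      exact ⟨rfl, rfl⟩
    constructor
    · intro H p hp
      have hle := hp.length_le
      have := H p.length (by simp [upSwitches]; omega)
      rw [(e _ hle).1, (e _ hle).2, ← List.prefix_iff_eq_take.1 hp] at this
      simpa using this
    · intro H t ht
      have hle : t ≤ m.length := by simp [upSwitches] at ht; omega
      rw [(e _ hle).1, (e _ hle).2]
      simpa using H _ (List.take_prefix t m)
  constructor
  · rintro ⟨hD, -⟩
    refine ⟨?_, hpre.1 hD.2.2.2⟩
    obtain ⟨-, -, h3⟩ := switches_of_getLast w true hhead (hD.getLast?_eq (by omega))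
    rw [hX, hY] at h3
    simpa [upSwitches, downSwitches, count_true_map_beq] using h3
  · rintro ⟨-, hp⟩
    exact ⟨⟨hlen, hu, hd, hpre.2 hp⟩, hL⟩

/-- **Theorem (L = 1).** For every `n ≥ 1`, the number of Dyck paths of semilength `n`
with `L(D) = 1` is the `(n-1)`-st Motzkin number. -/
theorem dyck_L_eq_one_count (n : ℕ) (hn : 1 ≤ n) :
    (dyckL n 1).ncard = motzkin (n - 1) := by
  choose f hlen hf using fun w (hw : w ∈ dyckL n 1) => exists_corresponds_of_mem_dyckL hn hw
  refine Set.ncard_congr f (fun w hw => ⟨hlen w hw, ?_⟩) (fun v w hv hw h => ?_) ?_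
  · exact ((hf w hw).mem_dyckL_iff (by rw [hlen w hw]; omega)).1 hw
  · exact (hf v hv).left_unique (h ▸ hf w hw)
  · rintro m ⟨hm, hM⟩
    obtain ⟨w, hw⟩ := hM.exists_corresponds
    have hmem : w ∈ dyckL n 1 := (hw.mem_dyckL_iff (by omega)).2 hM
    exact ⟨w, hmem, (hf w hmem).right_unique hw⟩
end

section
/- For every integer n ≥ 4, the number of Dyck paths D of semilength n with L(D) = 2 is |D_n^2| = (n-3)·M_{n-4}; moreover |D_2^2| = 1 and |D_3^2| = 0. -/
/-! ### Followed-by sequences of a word -/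

/-- For each occurrence of `b` in `w`, record whether the next letter is `!b`; here `e` is the
letter (if any) following the whole word. -/
def turns (b : Bool) : List Bool → Option Bool → List Bool
  | [], _ => []
  | a :: l, e => if a = b then ((l.head?.or e) == some (!b)) :: turns b l e else turns b l e

lemma turns_append (b : Bool) (l₁ l₂ : List Bool) (e : Option Bool) :
    turns b (l₁ ++ l₂) e = turns b l₁ (l₂.head?.or e) ++ turns b l₂ e := by
  induction l₁ with
  | nil => simp [turns]
  | cons a l ih =>
    have : (l ++ l₂).head?.or e = l.head?.or (l₂.head?.or e) := by cases l <;> simp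
    simp only [List.cons_append, turns, this, ih]
    split_ifs <;> simp

lemma length_turns (b : Bool) (l : List Bool) (e : Option Bool) :
    (turns b l e).length = l.count b := by
  induction l with
  | nil => simp [turns]
  | cons a l ih => by_cases h : a = b <;> simp [turns, h, ih]

lemma turns_replicate_of_ne {b c : Bool} (h : c ≠ b) (k : ℕ) (e : Option Bool) :
    turns b (List.replicate k c) e = [] := by
  induction k with
  | zero => simp [turns]
  | succ k ih => simp [List.replicate_succ, turns, h, ih]

lemma turns_replicate_succ_not (b : Bool) (k : ℕ) :
    turns b (List.replicate (k + 1) b) (some (!b)) = List.replicate k false ++ [true] := by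
  induction k with
  | zero => simp [turns]
  | succ k ih =>
    rw [List.replicate_succ, turns, ih]
    simp [List.replicate_succ]

lemma turns_getLast?_ne (b : Bool) (l : List Bool) :
    (turns (!b) l (some b)).getLast? ≠ some false := by
  induction l with
  | nil => simp [turns]
  | cons a l ih =>
    by_cases h : a = !b
    · simp only [turns, h, if_true, List.getLast?_cons]
      cases hl : (turns (!b) l (some b)).getLast? with
      | some v => rw [hl] at ih; simpa using ih
      | none =>
        have h0 : l.count (!b) = 0 := by
          rw [← length_turns (!b) l (some b), List.getLast?_eq_none_iff.1 hl]; rfl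
        cases l with
        | nil => simp
        | cons c l =>
          have : c ≠ !b := fun hc => by simp [hc] at h0
          cases b <;> cases c <;> simp_all
    · simpa [turns, h] using ih

lemma count_turns (b : Bool) (l : List Bool) :
    (turns (!b) l (some b)).count true =
      (turns b l (some b)).count true + if l.head?.or (some b) = some b then 0 else 1 := by
  induction l with
  | nil => simp [turns]
  | cons a l ih =>
    cases l with
    | nil => cases a <;> cases b <;> simp [turns]
    | cons c l => cases a <;> cases b <;> cases c <;> simp_all [turns]

/-- A word is determined by its first letter and its two turn sequences. -/
lemma turns_injective : ∀ w w' : List Bool, w.head? = w'.head? →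
    turns true w none = turns true w' none → turns false w none = turns false w' none → w = w' := by
  intro w
  induction w with
  | nil => intro w' h _ _; cases w' <;> simp_all
  | cons a l ih =>
    intro w' h h1 h2
    cases w' with
    | nil => simp at h
    | cons a' l' =>
      obtain rfl : a = a' := by simpa using h
      have hb : (l.head? == some (!a)) = (l'.head? == some (!a)) ∧
          turns true l none = turns true l' none ∧ turns false l none = turns false l' none := by
        cases a <;> simp_all [turns]
      obtain ⟨h0, h3, h4⟩ := hb
      have hlen : l.length = l'.length := by
        rw [← List.count_true_add_count_false, ← List.count_true_add_count_false l',
          ← length_turns true l none, ← length_turns false l none, h3, h4,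
          length_turns, length_turns]
      congr 1
      refine ih l' ?_ h3 h4
      cases l with
      | nil => cases l' <;> simp_all
      | cons c l =>
        cases l' with
        | nil => simp at hlen
        | cons c' l' => cases a <;> cases c <;> cases c' <;> simp_all

lemma exists_turns (N : ℕ) : ∀ x y : List Bool, x.length + y.length ≤ N →
    x.getLast? ≠ some false → y.getLast? = some false →
    (x.count true = y.count true + 1 →
      ∃ w, turns true (true :: w) none = x ∧ turns false (true :: w) none = y) ∧
    (x.count true = y.count true →
      ∃ w, turns true (false :: w) none = x ∧ turns false (false :: w) none = y) := by
  induction N with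
  | zero =>
    intro x y h _ hy
    have : y = [] := List.length_eq_zero_iff.1 (by omega)
    simp [this] at hy
  | succ N ih =>
    intro x y h hx hy
    constructor
    · intro hc
      cases x with
      | nil => simp at hc
      | cons a xs =>
        have hxs : xs.getLast? ≠ some false := by
          cases xs with
          | nil => simp
          | cons => simpa using hx
        have ih' := ih xs y (by simp at h; omega) hxs hy
        cases a with
        | true =>
          obtain ⟨w, h1, h2⟩ := ih'.2 (by simpa using hc)
          exact ⟨false :: w, by simp [turns] at h1 ⊢; exact h1, by simp [turns] at h2 ⊢; exact h2⟩
        | false =>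
          obtain ⟨w, h1, h2⟩ := ih'.1 (by simpa using hc)
          exact ⟨true :: w, by simp [turns] at h1 ⊢; exact h1, by simp [turns] at h2 ⊢; exact h2⟩
    · intro hc
      cases y with
      | nil => simp at hy
      | cons a ys =>
        cases ys with
        | nil =>
          obtain rfl : a = false := by simpa using hy
          cases hl : x.getLast? with
          | none => exact ⟨[], by simp [turns, List.getLast?_eq_none_iff.1 hl], by simp [turns]⟩
          | some v =>
            obtain ⟨z, rfl⟩ := List.getLast?_eq_some_iff.1 hl
            cases v <;> simp_all
        | cons a' ys =>
          have ih' := ih x (a' :: ys) (by simp at h ⊢; omega) hx (by simpa using hy)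
          cases a with
          | true =>
            obtain ⟨w, h1, h2⟩ := ih'.1 (by simpa using hc)
            exact ⟨true :: w, by simp [turns] at h1 ⊢; exact h1, by simp [turns] at h2 ⊢; exact h2⟩
          | false =>
            obtain ⟨w, h1, h2⟩ := ih'.2 (by simpa using hc)
            exact ⟨false :: w, by simp [turns] at h1 ⊢; exact h1, by simp [turns] at h2 ⊢; exact h2⟩

/-! ### The statistics `rStat` and `sStat` -/

lemma findIdxs_getD_count (b : Bool) (w₁ w₂ : List Bool) :
    ((w₁ ++ b :: w₂).findIdxs (· == b)).getD (w₁.count b) 0 = w₁.length := by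
  rw [List.findIdxs_append, List.getD_append_right _ _ _ _ (by simp [List.count])]
  simp [List.count]

lemma exists_split_of_lt_count (b : Bool) (w : List Bool) :
    ∀ k < w.count b, ∃ w₁ w₂, w = w₁ ++ b :: w₂ ∧ w₁.count b = k := by
  induction w with
  | nil => simp
  | cons a l ih =>
    intro k hk
    by_cases hab : a = b
    · subst hab
      cases k with
      | zero => exact ⟨[], l, rfl, rfl⟩
      | succ k =>
        obtain ⟨w₁, w₂, rfl, h⟩ := ih k (by simpa using hk)
        exact ⟨a :: w₁, w₂, rfl, by simp [h]⟩
    · obtain ⟨w₁, w₂, rfl, h⟩ := ih k (by simpa [hab] using hk)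
      exact ⟨a :: w₁, w₂, rfl, by simp [hab, h]⟩

lemma exists_split_replicate (b : Bool) (w : List Bool) (h : 0 < w.count b) :
    ∃ r w₂, w = List.replicate r (!b) ++ b :: w₂ := by
  obtain ⟨w₁, w₂, rfl, h0⟩ := exists_split_of_lt_count b w 0 h
  refine ⟨w₁.length, w₂, ?_⟩
  congr 1
  refine List.eq_replicate_iff.2 ⟨rfl, fun c hc => ?_⟩
  have : b ∉ w₁ := List.count_eq_zero.1 h0
  cases b <;> cases c <;> simp_all

lemma count_between (b : Bool) (w₁ w₂ : List Bool) (r : ℕ) :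
    (((w₁ ++ b :: (List.replicate r (!b) ++ b :: w₂)).take
      (((w₁ ++ b :: (List.replicate r (!b) ++ b :: w₂)).findIdxs (· == b)).getD
        (w₁.count b + 1) 0)).drop
      (((w₁ ++ b :: (List.replicate r (!b) ++ b :: w₂)).findIdxs (· == b)).getD
        (w₁.count b) 0 + 1)).count (!b) = r := by
  have h1 := findIdxs_getD_count b w₁ (List.replicate r (!b) ++ b :: w₂)
  have h2 := findIdxs_getD_count b (w₁ ++ b :: List.replicate r (!b)) w₂
  have hc : (w₁ ++ b :: List.replicate r (!b)).count b = w₁.count b + 1 := by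
    cases b <;> simp [List.count_replicate]
  rw [hc, List.append_assoc, List.cons_append] at h2
  rw [h1, h2]
  have : w₁ ++ b :: (List.replicate r (!b) ++ b :: w₂) =
      (w₁ ++ b :: List.replicate r (!b)) ++ b :: w₂ := by simp
  rw [this, List.take_left]
  have : w₁ ++ b :: List.replicate r (!b) = (w₁ ++ [b]) ++ List.replicate r (!b) := by simp
  rw [this, List.drop_left' (by simp)]
  simp

/-- The common form of `rStat` and `sStat`: the number of `!b`'s between the `i`-th and the
`(i+1)`-st `b`. -/
def gap (b : Bool) (w : List Bool) (i : ℕ) : ℕ :=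
  ((w.take ((w.findIdxs (· == b)).getD i 0)).drop
    ((w.findIdxs (· == b)).getD (i - 1) 0 + 1)).count (!b)

lemma rStat_eq_gap (w : List Bool) (i : ℕ) : rStat w i = gap true w i := rfl

lemma sStat_eq_gap (w : List Bool) (i : ℕ) : sStat w i = gap false w i := rfl

lemma eq_of_count_eq_of_getLast? {p q s t : List Bool} (h : p ++ s = q ++ t)
    (hp : p.getLast? ≠ some false) (hq : q.getLast? ≠ some false)
    (hc : p.count true = q.count true) : p = q := by
  have key : ∀ p r : List Bool, (p ++ r).getLast? ≠ some false →
      (p ++ r).count true = p.count true → r = [] := by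
    intro p r h1 h2
    rcases r.eq_nil_or_concat with rfl | ⟨r', v, rfl⟩
    · rfl
    · cases v <;> simp_all
  rcases List.append_eq_append_iff.1 h with ⟨r, rfl, -⟩ | ⟨r, rfl, -⟩
  · rw [key p r hq hc.symm, List.append_nil]
  · rw [key q r hp hc, List.append_nil]

lemma gap_iff (b : Bool) {w X₁ X₂ : List Bool} {a : Bool} (hw : w.head? = some true)
    (hX : turns b w none = X₁ ++ a :: X₂) (hX₂ : X₂ ≠ []) :
    (0 < gap b w (X₁.length + 1) ↔ a = true) ∧
    (gap b w (X₁.length + 1) = 1 ↔ a = true ∧ ∃ Y₁ Y₂, turns (!b) w none = Y₁ ++ true :: Y₂ ∧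
      Y₁.getLast? ≠ some false ∧ Y₁.count true = X₁.count true + if b then 0 else 1) := by
  have hX₂' := List.length_pos_iff.2 hX₂
  have hlen := congrArg List.length hX
  simp only [length_turns, List.length_append, List.length_cons] at hlen
  obtain ⟨w₁, w₂, rfl, hk⟩ := exists_split_of_lt_count b w X₁.length (by omega)
  obtain ⟨r, w₃, rfl⟩ := exists_split_replicate b w₂ (by simp [hk] at hlen; omega)
  have hgap : gap b (w₁ ++ b :: (List.replicate r (!b) ++ b :: w₃)) (X₁.length + 1) = r := by
    rw [← hk]; exact count_between b w₁ w₃ r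
  rw [hgap]
  have hhead : w₁.head?.or (some b) = some true := by
    rw [← hw]; cases w₁ <;> simp
  rw [turns_append] at hX
  simp only [List.head?_cons, Option.some_or, turns, if_true] at hX
  obtain ⟨h1, h2⟩ := List.append_inj hX (by rw [length_turns, hk])
  have ha : (0 < r ↔ a = true) := by
    have := (List.cons.inj h2).1
    rw [← this]
    cases r <;> simp [List.replicate_succ]
  have hY : turns (!b) (w₁ ++ b :: (List.replicate r (!b) ++ b :: w₃)) none =
      turns (!b) w₁ (some b) ++ (turns (!b) (List.replicate r (!b)) (some b) ++
        turns (!b) w₃ none) := by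
    rw [turns_append]
    simp [turns, turns_append]
  have hlast := turns_getLast?_ne b w₁
  have hcount : (turns (!b) w₁ (some b)).count true = X₁.count true + if b then 0 else 1 := by
    rw [count_turns, hhead, h1]; cases b <;> simp
  refine ⟨ha, ?_⟩
  rw [← ha, hY]
  constructor
  · rintro rfl
    refine ⟨one_pos, turns (!b) w₁ (some b), turns (!b) w₃ none, ?_, hlast, hcount⟩
    simp [turns]
  · rintro ⟨hr, Y₁, Y₂, h, hl, hc⟩
    have := eq_of_count_eq_of_getLast? h hlast hl (by rw [hcount, hc])
    rw [this, List.append_cancel_left_eq] at h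
    obtain ⟨k, rfl⟩ := Nat.exists_eq_succ_of_ne_zero hr.ne'
    have hrep := turns_replicate_succ_not (!b) k
    rw [Bool.not_not] at hrep
    rw [Nat.succ_eq_add_one, hrep] at h
    cases k with
    | zero => rfl
    | succ k => simp [List.replicate_succ] at h

lemma choose_add_eq_two_iff {r s : ℕ} : (r + s).choose r = 2 ↔ r = 1 ∧ s = 1 := by
  refine ⟨fun h => ?_, by rintro ⟨rfl, rfl⟩; rfl⟩
  rcases r with _ | r
  · simp at h
  rcases s with _ | s
  · simp at h
  have h1 : (r + 1 + (s + 1)).choose (r + 1) =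
    (r + s + 1).choose r + (r + s + 1).choose (r + 1) := by
    rw [show r + 1 + (s + 1) = (r + s + 1) + 1 by ring, Nat.choose_succ_succ]
  have h2 : 0 < (r + s + 1).choose r := Nat.choose_pos (by omega)
  have h3 : 0 < (r + s + 1).choose (r + 1) := Nat.choose_pos (by omega)
  have h4 : (r + s + 1).choose r = 1 := by omega
  have h5 : (r + s + 1).choose (r + 1) = 1 := by omega
  rw [Nat.choose_eq_one_iff] at h4 h5
  omega

lemma LStat_eq_two_iff (n : ℕ) (w : List Bool) :
    LStat n w = 2 ↔ ∃ i ∈ Finset.Icc 1 (n - 1), (rStat w i = 1 ∧ sStat w i = 1) ∧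
      ∀ j ∈ Finset.Icc 1 (n - 1), j ≠ i → ¬ (0 < rStat w j ∧ 0 < sStat w j) := by
  have hone : ∀ j, (rStat w j + sStat w j).choose (rStat w j) = 1 ↔
      ¬ (0 < rStat w j ∧ 0 < sStat w j) := by
    intro j; rw [Nat.choose_eq_one_iff]; omega
  unfold LStat
  constructor
  · intro h
    obtain ⟨i, hi, hne⟩ := Finset.exists_ne_one_of_prod_ne_one (h.trans_ne (by norm_num))
    rw [← Finset.mul_prod_erase _ _ hi] at h
    have h2 := (Nat.dvd_prime Nat.prime_two).1 (Dvd.intro _ h)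
    have h2 := h2.resolve_left hne
    rw [h2] at h
    have h3 := Finset.prod_eq_one_iff.1 (show _ = 1 by linarith)
    exact ⟨i, hi, choose_add_eq_two_iff.1 h2, fun j hj hji =>
      (hone j).1 (h3 j (Finset.mem_erase.2 ⟨hji, hj⟩))⟩
  · rintro ⟨i, hi, h1, h2⟩
    rw [Finset.prod_eq_single_of_mem i hi fun j hj hji => (hone j).2 (h2 j hj hji)]
    exact choose_add_eq_two_iff.2 h1

/-! ### Encoding Dyck words by pairs of bits -/

/-- The number of letters of `c` with first bit set. -/
def dn (c : List (Bool × Bool)) : ℕ := (c.map Prod.fst).count true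

/-- The number of letters of `c` with second bit set. -/
def up (c : List (Bool × Bool)) : ℕ := (c.map Prod.snd).count true

@[simp] lemma dn_nil : dn [] = 0 := rfl
@[simp] lemma up_nil : up [] = 0 := rfl
@[simp] lemma dn_append (c d : List (Bool × Bool)) : dn (c ++ d) = dn c + dn d := by simp [dn]
@[simp] lemma up_append (c d : List (Bool × Bool)) : up (c ++ d) = up c + up d := by simp [up]
@[simp] lemma dn_cons (a : Bool × Bool) (c : List (Bool × Bool)) :
    dn (a :: c) = a.1.toNat + dn c := by
  rcases a with ⟨_ | _, b⟩ <;> simp [dn, add_comm]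
@[simp] lemma up_cons (a : Bool × Bool) (c : List (Bool × Bool)) :
    up (a :: c) = a.2.toNat + up c := by
  rcases a with ⟨b, _ | _⟩ <;> simp [up, add_comm]

/-- Starting with `a` downs and `b` ups, the word `c` never has more downs than ups. -/
def Nonneg (a b : ℕ) (c : List (Bool × Bool)) : Prop := ∀ p, p <+: c → a + dn p ≤ b + up p

lemma nonneg_nil {a b : ℕ} : Nonneg a b [] ↔ a ≤ b := by simp [Nonneg]

lemma nonneg_append {a b : ℕ} {c d : List (Bool × Bool)} :
    Nonneg a b (c ++ d) ↔ Nonneg a b c ∧ Nonneg (a + dn c) (b + up c) d := by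
  constructor
  · intro h
    refine ⟨fun p hp => h p (hp.trans (List.prefix_append _ _)), fun p hp => ?_⟩
    have := h (c ++ p) ((List.prefix_append_right_inj c).2 hp)
    simp at this; omega
  · rintro ⟨h1, h2⟩ p ⟨q, hq⟩
    rcases List.append_eq_append_iff.1 hq with ⟨r, rfl, -⟩ | ⟨r, rfl, rfl⟩
    · exact h1 p (List.prefix_append _ _)
    · have := h2 r (List.prefix_append _ _)
      simp; omega

lemma nonneg_cons {a b : ℕ} {v : Bool × Bool} {c : List (Bool × Bool)} :
    Nonneg a b (v :: c) ↔ a ≤ b ∧ Nonneg (a + v.1.toNat) (b + v.2.toNat) c := by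
  constructor
  · intro h
    refine ⟨by simpa using h [] List.nil_prefix, fun p hp => ?_⟩
    have := h (v :: p) (by simpa using hp)
    simp at this; omega
  · rintro ⟨h1, h2⟩ p hp
    cases p with
    | nil => simpa using h1
    | cons u p =>
      obtain ⟨rfl, hp'⟩ := List.cons_prefix_cons.1 hp
      have := h2 p hp'
      simp; omega

/-- The word `w` has the turn sequences recorded by `c`. -/
def Encodes (w : List Bool) (c : List (Bool × Bool)) : Prop :=
  w.head? = some true ∧ turns true w none = c.map Prod.fst ++ [true] ∧
    turns false w none = c.map Prod.snd ++ [false]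

lemma Encodes.dyck {w : List Bool} {c : List (Bool × Bool)} (h : Encodes w c)
    (hc : Nonneg 0 0 c) : IsDyckWord (c.length + 1) w := by
  obtain ⟨hw, hX, hY⟩ := h
  have ht : w.count true = c.length + 1 := by simp [← length_turns true w none, hX]
  have hf : w.count false = c.length + 1 := by simp [← length_turns false w none, hY]
  refine ⟨by rw [← List.count_true_add_count_false]; omega, ht, hf, ?_⟩
  rintro p ⟨q, hq⟩
  induction q generalizing p with
  | nil =>
    rw [List.append_nil] at hq
    rw [hq]; omega
  | cons v q ih =>
    cases v with
    | false =>
      have := ih (p ++ [false]) (by simpa using hq)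
      simp at this; omega
    | true =>
      subst hq
      rw [turns_append] at hX hY
      simp only [List.head?_cons, Option.some_or] at hX hY
      have hcount := count_turns true p
      have hhead : p.head?.or (some true) = some true := by
        rw [← hw]; cases p <;> simp
      rw [hhead] at hcount
      simp only [Bool.not_true, if_true, add_zero] at hcount
      have hlast := turns_getLast?_ne true p
      simp only [Bool.not_true] at hlast
      have hlX := length_turns true p (some true)
      have hlY := length_turns false p (some true)
      generalize turns true p (some true) = X at *
      generalize turns false p (some true) = Y at *
      by_contra hlt
      rw [not_le, ← hlX, ← hlY] at hlt
      have hk : X.length ≤ c.length := by simp at ht; omega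
      have h1 : X = (c.take X.length).map Prod.fst := by
        have := congrArg (List.take X.length) hX
        rw [List.take_left, List.take_append_of_le_length (by simpa using hk)] at this
        rw [List.map_take]; exact this
      have h2 : Y.take X.length = (c.take X.length).map Prod.snd := by
        have := congrArg (List.take X.length) hY
        rw [List.take_append_of_le_length hlt.le,
          List.take_append_of_le_length (by simpa using hk)] at this
        rw [List.map_take]; exact this
      have h3 := hc _ (List.take_prefix X.length c)
      rw [dn, up, ← h1, ← h2] at h3
      rcases Y.eq_nil_or_concat with rfl | ⟨Z, v, rfl⟩
      · simp at hlt
      · obtain rfl : v = true := by simpa using hlast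
        rw [List.concat_eq_append] at *
        rw [List.take_append_of_le_length (by simp at hlt; omega)] at h3
        have := (List.take_sublist X.length Z).count_le true
        simp at hcount; omega

lemma IsDyckWord.exists_encodes {n : ℕ} {w : List Bool} (hn : 1 ≤ n) (h : IsDyckWord n w) :
    ∃ c, c.length + 1 = n ∧ dn c = up c ∧ Nonneg 0 0 c ∧ Encodes w c := by
  obtain ⟨hl, ht, hf, hp⟩ := h
  have hw : w.head? = some true := by
    cases w with
    | nil => simp at hl; omega
    | cons a w =>
      have := hp [a] (by simp)
      cases a <;> simp_all
  obtain ⟨l, rfl⟩ : ∃ l, w = l ++ [false] := by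
    rcases w.eq_nil_or_concat with rfl | ⟨l, v, rfl⟩
    · simp at hl; omega
    · rw [List.concat_eq_append] at *
      have := hp l (List.prefix_append _ _)
      cases v
      · exact ⟨l, rfl⟩
      · simp at ht hf; omega
  have hhead : l.head?.or (some false) = some true := by
    rw [← hw]; cases l <;> simp
  have hX : turns true (l ++ [false]) none = turns true l (some false) := by
    simp [turns_append, turns]
  have hY : turns false (l ++ [false]) none = turns false l (some false) ++ [false] := by
    simp [turns_append, turns]
  have hcount := count_turns false l
  rw [hhead] at hcount
  simp only [Bool.not_false] at hcount
  have hlast := turns_getLast?_ne false l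
  simp only [Bool.not_false] at hlast
  have hlX := length_turns true l (some false)
  have hlY := length_turns false l (some false)
  obtain ⟨x, hx⟩ : ∃ x, turns true l (some false) = x ++ [true] := by
    rcases (turns true l (some false)).eq_nil_or_concat with h | ⟨x, v, h⟩
    · simp [h] at hcount
    · rw [h] at hlast
      obtain rfl : v = true := by simpa using hlast
      exact ⟨x, by simpa using h⟩
  set y := turns false l (some false) with hy
  have hxy : x.length = y.length := by
    rw [hx] at hlX; simp at hlX ht hf; omega
  have h1 : (x.zip y).map Prod.fst = x := List.map_fst_zip (by omega)
  have h2 : (x.zip y).map Prod.snd = y := List.map_snd_zip (by omega)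
  refine ⟨x.zip y, ?_, ?_, ?_, hw, by rw [hX, hx, h1], by rw [hY, h2]⟩
  · simp at hf ⊢; omega
  · rw [dn, up, h1, h2]; rw [hx] at hcount; simpa using hcount
  · rintro p ⟨q, hq⟩
    rw [← hq, List.map_append] at h1 h2
    have hX' : turns true (l ++ [false]) none =
      p.map Prod.fst ++ (q.map Prod.fst ++ [true]) := by
      rw [hX, hx, ← h1]; simp
    have hY' : turns false (l ++ [false]) none =
      p.map Prod.snd ++ (q.map Prod.snd ++ [false]) := by
      rw [hY, ← h2]; simp
    have hlen := congrArg List.length hX'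
    simp only [length_turns, List.length_append, List.length_map, List.length_cons,
      List.length_nil] at hlen
    obtain ⟨w₁, w₂, hw12, hk⟩ := exists_split_of_lt_count true (l ++ [false]) p.length (by omega)
    have hdyck := hp w₁ (hw12 ▸ List.prefix_append _ _)
    rw [hw12] at hX' hY' hw
    rw [turns_append] at hX' hY'
    simp only [List.head?_cons, Option.some_or] at hX' hY'
    have hhead' : w₁.head?.or (some true) = some true := by
      rw [← hw]; cases w₁ <;> simp
    have hcount' := count_turns true w₁
    rw [hhead'] at hcount'
    simp only [Bool.not_true, if_true, add_zero] at hcount'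
    obtain ⟨h3, -⟩ := List.append_inj hX' (by rw [length_turns]; simpa using hk)
    have h4 : turns false w₁ (some true) <+: p.map Prod.snd := by
      refine List.prefix_of_prefix_length_le (hY' ▸ List.prefix_append _ _)
        (List.prefix_append _ _) ?_
      rw [length_turns]; simp; omega
    have := h4.sublist.count_le true
    rw [dn, up, ← h3]; omega

lemma eq_of_map_fst_snd {c d : List (Bool × Bool)} (h1 : c.map Prod.fst = d.map Prod.fst)
    (h2 : c.map Prod.snd = d.map Prod.snd) : c = d := by
  rw [← List.zip_unzip c, ← List.zip_unzip d, List.unzip_eq_map, List.unzip_eq_map, h1, h2]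

lemma exists_encodes_of_dn_eq_up {c : List (Bool × Bool)} (hc : dn c = up c) :
    ∃ w, Encodes w c := by
  obtain ⟨w, h1, h2⟩ := (exists_turns _ (c.map Prod.fst ++ [true]) (c.map Prod.snd ++ [false])
    le_rfl (by simp) (by simp)).1 (by simpa [dn, up] using hc)
  exact ⟨true :: w, rfl, h1, h2⟩

/-- The encoding condition for `rᵢ = 1` at the letter following the prefix `P` of `c`. -/
def UpTight (c P : List (Bool × Bool)) : Prop :=
  ∃ Y₁ Y₂, c.map Prod.snd ++ [false] = Y₁ ++ true :: Y₂ ∧ Y₁.getLast? ≠ some false ∧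
    Y₁.count true = dn P

/-- The encoding condition for `sᵢ = 1` at the letter following the prefix `P` of `c`. -/
def DownTight (c P : List (Bool × Bool)) : Prop :=
  ∃ X₁ X₂, c.map Prod.fst ++ [true] = X₁ ++ true :: X₂ ∧ X₁.getLast? ≠ some false ∧
    X₁.count true = up P + 1

lemma Encodes.rStat_iff {w : List Bool} {P Q : List (Bool × Bool)} {a : Bool × Bool}
    (h : Encodes w (P ++ a :: Q)) :
    (0 < rStat w (P.length + 1) ↔ a.1 = true) ∧
    (rStat w (P.length + 1) = 1 ↔ a.1 = true ∧ UpTight (P ++ a :: Q) P) := by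
  obtain ⟨hw, hX, hY⟩ := h
  have := gap_iff true (X₁ := P.map Prod.fst) (a := a.1) (X₂ := Q.map Prod.fst ++ [true]) hw
    (by simpa using hX) (by simp)
  rw [Bool.not_true, hY] at this
  simpa [UpTight, dn, rStat_eq_gap] using this

lemma Encodes.sStat_iff {w : List Bool} {P Q : List (Bool × Bool)} {a : Bool × Bool}
    (h : Encodes w (P ++ a :: Q)) :
    (0 < sStat w (P.length + 1) ↔ a.2 = true) ∧
    (sStat w (P.length + 1) = 1 ↔ a.2 = true ∧ DownTight (P ++ a :: Q) P) := by
  obtain ⟨hw, hX, hY⟩ := h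
  have := gap_iff false (X₁ := P.map Prod.snd) (a := a.2) (X₂ := Q.map Prod.snd ++ [false]) hw
    (by simpa using hY) (by simp)
  rw [Bool.not_false, hX] at this
  simpa [DownTight, up, sStat_eq_gap] using this

lemma Encodes.LStat_eq_two_iff {w : List Bool} {c : List (Bool × Bool)} (h : Encodes w c) :
    LStat (c.length + 1) w = 2 ↔ ∃ P Q, c = P ++ (true, true) :: Q ∧ (true, true) ∉ P ∧
      (true, true) ∉ Q ∧ UpTight c P ∧ DownTight c P := by
  have hmem : ∀ P a Q, c = P ++ a :: Q → (0 < rStat w (P.length + 1) ∧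
      0 < sStat w (P.length + 1) ↔ a = (true, true)) := by
    rintro P a Q rfl
    rw [h.rStat_iff.1, h.sStat_iff.1, Prod.ext_iff]
  have hsplit : ∀ i ∈ Finset.Icc 1 (c.length + 1 - 1), ∃ P a Q, c = P ++ a :: Q ∧
      i = P.length + 1 := by
    intro i hi
    rw [Finset.mem_Icc] at hi
    refine ⟨c.take (i - 1), c.get ⟨i - 1, by omega⟩, c.drop (i - 1 + 1), by simp, ?_⟩
    rw [List.length_take]; omega
  rw [_root_.LStat_eq_two_iff]
  constructor
  · rintro ⟨i, hi, ⟨hr, hs⟩, hother⟩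
    obtain ⟨P, a, Q, hc, rfl⟩ := hsplit i hi
    have ha := (hmem P a Q hc).1 (by omega)
    subst ha
    refine ⟨P, Q, hc, fun hP => ?_, fun hQ => ?_, ?_, ?_⟩
    · obtain ⟨P₁, P₂, rfl⟩ := List.append_of_mem hP
      have h1 := (hmem P₁ (true, true) (P₂ ++ (true, true) :: Q) (by simp [hc])).2 rfl
      exact hother (P₁.length + 1) (by simp [hc]) (by simp) h1
    · obtain ⟨Q₁, Q₂, rfl⟩ := List.append_of_mem hQ
      have h1 := (hmem (P ++ (true, true) :: Q₁) (true, true) Q₂ (by simp [hc])).2 rfl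
      exact hother _ (by simp [hc]) (by simp) h1
    · subst hc; exact (h.rStat_iff.2.1 hr).2
    · subst hc; exact (h.sStat_iff.2.1 hs).2
  · rintro ⟨P, Q, hc, hP, hQ, hR, hS⟩
    refine ⟨P.length + 1, by simp [hc], ?_, fun j hj hne hpos => ?_⟩
    · subst hc; exact ⟨h.rStat_iff.2.2 ⟨rfl, hR⟩, h.sStat_iff.2.2 ⟨rfl, hS⟩⟩
    · obtain ⟨P', a, Q', hc', rfl⟩ := hsplit j hj
      have ha := (hmem P' a Q' hc').1 hpos
      subst ha
      rw [hc] at hc'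
      rcases List.append_eq_append_iff.1 hc' with ⟨r, rfl, hr⟩ | ⟨r, rfl, hr⟩ <;>
        rcases r with _ | ⟨v, r⟩ <;> simp_all

/-- The encodings of the Dyck words of semilength `n` with `L = 2`. -/
def doubleCodes (n : ℕ) : Set (List (Bool × Bool)) :=
  {c | c.length + 1 = n ∧ dn c = up c ∧ Nonneg 0 0 c ∧ ∃ P Q, c = P ++ (true, true) :: Q ∧
    (true, true) ∉ P ∧ (true, true) ∉ Q ∧ UpTight c P ∧ DownTight c P}

lemma ncard_dyckL_two {n : ℕ} (hn : 1 ≤ n) : (dyckL n 2).ncard = (doubleCodes n).ncard := by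
  have hF : Set.InjOn (fun w => (turns true w none, turns false w none)) (dyckL n 2) := by
    intro w hw w' hw' h
    obtain ⟨c, -, -, -, hc, -⟩ := hw.1.exists_encodes hn
    obtain ⟨c', -, -, -, hc', -⟩ := hw'.1.exists_encodes hn
    exact turns_injective w w' (hc.trans hc'.symm) (congrArg Prod.fst h) (congrArg Prod.snd h)
  have hG : Set.InjOn (fun c : List (Bool × Bool) =>
      (c.map Prod.fst ++ [true], c.map Prod.snd ++ [false])) (doubleCodes n) := by
    intro c _ c' _ h
    simp only [Prod.mk.injEq, List.append_cancel_right_eq] at h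
    exact eq_of_map_fst_snd h.1 h.2
  rw [← hF.ncard_image, ← hG.ncard_image]
  congr 1
  ext ⟨x, y⟩
  constructor
  · rintro ⟨w, ⟨hw, hL⟩, h⟩
    obtain ⟨c, rfl, hdu, hc, he⟩ := hw.exists_encodes hn
    refine ⟨c, ⟨rfl, hdu, hc, he.LStat_eq_two_iff.1 hL⟩, ?_⟩
    rw [← h]
    simp only [he.2.1, he.2.2]
  · rintro ⟨c, ⟨rfl, hdu, hc, hL⟩, h⟩
    obtain ⟨w, he⟩ := exists_encodes_of_dn_eq_up hdu
    refine ⟨w, ⟨he.dyck hc, he.LStat_eq_two_iff.2 hL⟩, ?_⟩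
    rw [← h]
    simp only [he.2.1, he.2.2]

/-! ### Removing the marked letter and its two witnesses -/

lemma eq_of_up_eq {p q s t : List (Bool × Bool)} (h : p ++ s = q ++ t)
    (hp : (p.map Prod.snd).getLast? ≠ some false) (hq : (q.map Prod.snd).getLast? ≠ some false)
    (hc : up p = up q) : p = q ∧ s = t := by
  have h1 : p.map Prod.snd ++ s.map Prod.snd = q.map Prod.snd ++ t.map Prod.snd := by
    simpa using congrArg (List.map Prod.snd) h
  have h2 := congrArg List.length (eq_of_count_eq_of_getLast? h1 hp hq hc)
  exact List.append_inj h (by simpa using h2)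

lemma eq_of_dn_eq {p q s t : List (Bool × Bool)} (h : s ++ p = t ++ q)
    (hp : (p.map Prod.fst).head? ≠ some false) (hq : (q.map Prod.fst).head? ≠ some false)
    (hc : dn p = dn q) : s = t ∧ p = q := by
  have h1 : (p.map Prod.fst).reverse ++ (s.map Prod.fst).reverse =
      (q.map Prod.fst).reverse ++ (t.map Prod.fst).reverse := by
    simpa using congrArg (fun l => (l.map Prod.fst).reverse) h
  have h2 := congrArg List.length (eq_of_count_eq_of_getLast? h1 (by simpa using hp)
    (by simpa using hq) (by simpa [dn] using hc))
  exact List.append_inj' h (by simpa using h2)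

lemma exists_split_up (k : ℕ) (P : List (Bool × Bool)) (hk : k ≤ up P) :
    ∃ P₁ P₂, P = P₁ ++ P₂ ∧ (P₁.map Prod.snd).getLast? ≠ some false ∧ up P₁ = k := by
  induction P using List.reverseRecOn with
  | nil => exact ⟨[], [], rfl, by simp, by simp at hk ⊢; omega⟩
  | append_singleton P a ih =>
    by_cases h : k ≤ up P
    · obtain ⟨P₁, P₂, rfl, h1, h2⟩ := ih h
      exact ⟨P₁, P₂ ++ [a], by simp, h1, h2⟩
    · rcases a with ⟨b, _ | _⟩
      · simp at hk; omega
      · exact ⟨P ++ [(b, true)], [], by simp, by simp, by simp at hk ⊢; omega⟩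

lemma exists_split_dn (k : ℕ) (Q : List (Bool × Bool)) (hk : k ≤ dn Q) :
    ∃ Q₂ Q₁, Q = Q₂ ++ Q₁ ∧ (Q₁.map Prod.fst).head? ≠ some false ∧ dn Q₁ = k := by
  induction Q with
  | nil => exact ⟨[], [], rfl, by simp, by simp at hk ⊢; omega⟩
  | cons a Q ih =>
    by_cases h : k ≤ dn Q
    · obtain ⟨Q₂, Q₁, rfl, h1, h2⟩ := ih h
      exact ⟨a :: Q₂, Q₁, by simp, h1, h2⟩
    · rcases a with ⟨_ | _, b⟩
      · simp at hk; omega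
      · exact ⟨[], (true, b) :: Q, by simp, by simp, by simp at hk ⊢; omega⟩

lemma append_cons_inj_of_notMem {α : Type*} {a : α} {p q s t : List α}
    (h : p ++ a :: s = q ++ a :: t) (hp : a ∉ p) (hq : a ∉ q) : p = q ∧ s = t := by
  rcases List.append_eq_append_iff.1 h with ⟨r, rfl, hr⟩ | ⟨r, rfl, hr⟩ <;>
    rcases r with _ | ⟨v, r⟩ <;> simp_all

lemma Nonneg.mono {a b a' b' : ℕ} {c : List (Bool × Bool)} (h : Nonneg a b c)
    (hab : a' + b ≤ b' + a) : Nonneg a' b' c := by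
  intro p hp
  have := h p hp
  omega

/-- Quadruples `(P₁, P₂, Q₂, Q₁)` refining a cut Motzkin word `P₁ P₂ | Q₂ Q₁` of length `m`: the
word `P₁` is the shortest prefix with as many ups as `P₁ P₂` has downs, and symmetrically `Q₁` is
the shortest suffix with as many downs as `Q₂ Q₁` has ups. -/
def refinedCuts (m : ℕ) : Set ((List (Bool × Bool) × List (Bool × Bool)) ×
    (List (Bool × Bool) × List (Bool × Bool))) :=
  {t | (t.1.1 ++ t.1.2 ++ (t.2.1 ++ t.2.2)).length = m ∧
    (true, true) ∉ t.1.1 ++ t.1.2 ++ (t.2.1 ++ t.2.2) ∧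
    dn (t.1.1 ++ t.1.2 ++ (t.2.1 ++ t.2.2)) = up (t.1.1 ++ t.1.2 ++ (t.2.1 ++ t.2.2)) ∧
    Nonneg 0 0 (t.1.1 ++ t.1.2 ++ (t.2.1 ++ t.2.2)) ∧
    (t.1.1.map Prod.snd).getLast? ≠ some false ∧ up t.1.1 = dn t.1.1 + dn t.1.2 ∧
    (t.2.2.map Prod.fst).head? ≠ some false ∧ dn t.2.2 = up t.2.1 + up t.2.2}

/-- The encoding of `L = 2` words obtained by inserting three letters in a refined cut. -/
def insertMarks (t : (List (Bool × Bool) × List (Bool × Bool)) ×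
    (List (Bool × Bool) × List (Bool × Bool))) : List (Bool × Bool) :=
  (t.1.1 ++ (false, true) :: t.1.2) ++ (true, true) :: (t.2.1 ++ (true, false) :: t.2.2)

lemma insertMarks_injOn (m : ℕ) : Set.InjOn insertMarks (refinedCuts m) := by
  rintro ⟨⟨P₁, P₂⟩, Q₂, Q₁⟩ ⟨-, hB, -, -, hP, hPc, hQ, hQc⟩ ⟨⟨P₁', P₂'⟩, Q₂', Q₁'⟩
    ⟨-, hB', -, -, hP', hPc', hQ', hQc'⟩ h
  simp only [insertMarks, List.mem_append, not_or] at *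
  obtain ⟨h1, h2⟩ := append_cons_inj_of_notMem h (by simp [hB]) (by simp [hB'])
  have hd := congrArg dn h1
  have hu := congrArg up h2
  simp at hd hu
  obtain ⟨rfl, h3⟩ := eq_of_up_eq h1 hP hP' (by omega)
  have h2' : (Q₂ ++ [(true, false)]) ++ Q₁ = (Q₂' ++ [(true, false)]) ++ Q₁' := by simpa using h2
  obtain ⟨h4, rfl⟩ := eq_of_dn_eq h2' hQ hQ' (by omega)
  simp at h3 h4
  simp [h3, h4]

lemma join_injOn (m : ℕ) :
    Set.InjOn (fun t => (t.1.1 ++ t.1.2, t.2.1 ++ t.2.2)) (refinedCuts m) := by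
  rintro ⟨⟨P₁, P₂⟩, Q₂, Q₁⟩ ⟨-, -, -, -, hP, hPc, hQ, hQc⟩ ⟨⟨P₁', P₂'⟩, Q₂', Q₁'⟩
    ⟨-, -, -, -, hP', hPc', hQ', hQc'⟩ h
  simp only [Prod.mk.injEq] at *
  have hd := congrArg dn h.1
  have hu := congrArg up h.2
  simp at hd hu
  exact ⟨eq_of_up_eq h.1 hP hP' (by omega), eq_of_dn_eq h.2 hQ hQ' (by omega)⟩

lemma insertMarks_mem {m : ℕ} {t : (List (Bool × Bool) × List (Bool × Bool)) ×
    (List (Bool × Bool) × List (Bool × Bool))} (ht : t ∈ refinedCuts m) :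
    insertMarks t ∈ doubleCodes (m + 4) := by
  obtain ⟨⟨P₁, P₂⟩, Q₂, Q₁⟩ := t
  obtain ⟨hl, hB, hdu, hN, hP, hPc, hQ, hQc⟩ := ht
  simp only [List.mem_append, not_or, List.length_append, dn_append, up_append,
    nonneg_append] at *
  obtain ⟨⟨hN1, hN2⟩, hN3, hN4⟩ := hN
  refine ⟨?_, ?_, ?_, P₁ ++ (false, true) :: P₂, Q₂ ++ (true, false) :: Q₁, rfl, by simp [hB],
    by simp [hB], ?_, ?_⟩
  · simp [insertMarks]; omega
  · simp [insertMarks]; omega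
  · simp only [insertMarks, nonneg_append, nonneg_cons]
    have h0 := hN1 P₁ (List.prefix_refl _)
    have h1 := hN2 P₂ (List.prefix_refl _)
    have h2 := hN3 Q₂ (List.prefix_refl _)
    simp only [dn_append, up_append, dn_cons, up_cons, Bool.toNat_true, Bool.toNat_false]
    exact ⟨⟨hN1, by omega, hN2.mono (by omega)⟩, by omega, hN3.mono (by omega), by omega,
      hN4.mono (by omega)⟩
  · refine ⟨P₁.map Prod.snd, P₂.map Prod.snd ++ true ::
      ((Q₂ ++ (true, false) :: Q₁).map Prod.snd ++ [false]), by simp [insertMarks], hP, ?_⟩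
    change up P₁ = _
    simp; omega
  · have hV : ∃ V, Q₁.map Prod.fst ++ [true] = true :: V := by
      cases Q₁ with
      | nil => exact ⟨[], rfl⟩
      | cons a Q₁ =>
        obtain h : a.1 = true := by simpa using hQ
        exact ⟨Q₁.map Prod.fst ++ [true], by simp [h]⟩
    obtain ⟨V, hV⟩ := hV
    refine ⟨(P₁ ++ (false, true) :: P₂ ++ (true, true) :: (Q₂ ++ [(true, false)])).map Prod.fst,
      V, by simp [insertMarks, hV], by simp [List.getLast?_cons], ?_⟩
    change dn _ = _
    simp; omega

lemma UpTight.exists_split {P Q : List (Bool × Bool)} (hP : (true, true) ∉ P)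
    (hQ : (true, true) ∉ Q) (hPQ : P ++ (true, true) :: Q ≠ [(true, true)])
    (hN : Nonneg 0 0 (P ++ (true, true) :: Q))
    (hR : UpTight (P ++ (true, true) :: Q) P) (hS : DownTight (P ++ (true, true) :: Q) P) :
    ∃ P₁ P₂, P = P₁ ++ (false, true) :: P₂ ∧ (P₁.map Prod.snd).getLast? ≠ some false ∧
      up P₁ = dn P := by
  rw [nonneg_append] at hN
  obtain ⟨hN, hN'⟩ := hN
  have h0 := hN P (List.prefix_refl _)
  obtain ⟨Y₁, Y₂, hY, hlast, hcount⟩ := hR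
  have hY' : P.map Prod.snd ++ (true :: (Q.map Prod.snd ++ [false])) = Y₁ ++ true :: Y₂ := by
    simpa using hY
  have hcases : Y₁ = P.map Prod.snd ∨ ∃ V, P.map Prod.snd = Y₁ ++ true :: V := by
    rcases List.append_eq_append_iff.1 hY' with ⟨r, hr, hr'⟩ | ⟨r, hr, hr'⟩
    · rcases r with _ | ⟨v, r⟩
      · left; simpa using hr
      · obtain rfl : true = v := (List.cons.inj hr').1
        rw [hr] at hcount
        simp only [List.count_append, List.count_cons_self] at hcount
        change up P + _ = _ at hcount
        omega
    · rcases r with _ | ⟨v, r⟩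
      · left; simpa using hr.symm
      · obtain rfl : true = v := (List.cons.inj hr').1
        exact Or.inr ⟨r, hr⟩
  rcases hcases with rfl | ⟨V, hV⟩
  · exfalso
    change up P = dn P at hcount
    obtain rfl : P = [] := by
      rcases P.eq_nil_or_concat with h | ⟨Z, ⟨a, b⟩, rfl⟩
      · exact h
      · rw [List.concat_eq_append] at *
        obtain rfl : b = true := by simpa using hlast
        have h1 := hN Z (List.prefix_append _ _)
        cases a
        · simp at hcount h1; omega
        · simp at hP
    obtain ⟨X₁, X₂, hX, hlastX, hcX⟩ := hS
    cases Q with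
    | nil => simp at hPQ
    | cons a Q =>
      have hX' : [true] ++ (a.1 :: (Q.map Prod.fst ++ [true])) = X₁ ++ true :: X₂ := by
        simpa using hX
      obtain rfl := eq_of_count_eq_of_getLast? hX' (by simp) hlastX (by simpa using hcX.symm)
      simp only [List.append_cancel_left_eq, List.cons.injEq] at hX'
      rcases a with ⟨a, b⟩
      obtain rfl : a = true := hX'.1
      cases b
      · simp only [nonneg_cons] at hN'
        have := hN'.2.2 [] List.nil_prefix
        simp at this
      · simp at hQ
  · obtain ⟨P₁, P', rfl, h1, h2⟩ := List.map_eq_append_iff.1 hV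
    obtain ⟨⟨a, b⟩, P₂, rfl, h3, h4⟩ := List.map_eq_cons_iff.1 h2
    obtain rfl : b = true := h3
    cases a
    · refine ⟨P₁, P₂, rfl, by rwa [h1], ?_⟩
      rw [← hcount, ← h1]; rfl
    · simp at hP

lemma DownTight.exists_split {P Q : List (Bool × Bool)} (hQ : (true, true) ∉ Q)
    (hlt : dn P < up P) (hS : DownTight (P ++ (true, true) :: Q) P) :
    ∃ Q₂ Q₁, Q = Q₂ ++ (true, false) :: Q₁ ∧ (Q₁.map Prod.fst).head? ≠ some false ∧
      dn P + 1 + dn Q₂ = up P := by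
  obtain ⟨X₁, X₂, hX, hlast, hcount⟩ := hS
  obtain ⟨Z, rfl⟩ : ∃ Z, X₁ = Z ++ [true] := by
    rcases X₁.eq_nil_or_concat with rfl | ⟨Z, v, rfl⟩
    · simp at hcount
    · obtain rfl : v = true := by simpa using hlast
      exact ⟨Z, by simp⟩
  have hX' : (P.map Prod.fst ++ [true]) ++ (Q.map Prod.fst ++ [true]) =
      Z ++ true :: true :: X₂ := by simpa using hX
  have hZ : Z.count true = up P := by simpa using hcount
  obtain ⟨r, rfl, hr⟩ : ∃ r, Z = (P.map Prod.fst ++ [true]) ++ r ∧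
      Q.map Prod.fst ++ [true] = r ++ true :: true :: X₂ := by
    rcases List.append_eq_append_iff.1 hX' with h | ⟨r, hr, hr'⟩
    · exact h
    · have hc := congrArg (List.count true) hr
      simp only [List.count_append, hZ, List.count_singleton_self] at hc
      change dn P + 1 = _ at hc
      rcases r with _ | ⟨v, r⟩
      · exact ⟨[], by simpa using hr.symm, by simpa using hr'.symm⟩
      · obtain rfl : true = v := (List.cons.inj hr').1
        simp at hc; omega
  obtain ⟨V, hV, hVh⟩ : ∃ V, Q.map Prod.fst = r ++ true :: V ∧ V.head? ≠ some false := by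
    rcases X₂.eq_nil_or_concat with rfl | ⟨V, v, rfl⟩
    · refine ⟨[], ?_, by simp⟩
      have : Q.map Prod.fst ++ [true] = (r ++ [true]) ++ [true] := by simpa using hr
      exact (List.append_inj' this rfl).1
    · refine ⟨true :: V, ?_, by simp⟩
      have : Q.map Prod.fst ++ [true] = (r ++ true :: true :: V) ++ [v] := by simpa using hr
      exact (List.append_inj' this rfl).1
  obtain ⟨Q₂, Q', rfl, h1, h2⟩ := List.map_eq_append_iff.1 hV
  obtain ⟨⟨a, b⟩, Q₁, rfl, h3, h4⟩ := List.map_eq_cons_iff.1 h2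
  obtain rfl : a = true := h3
  cases b
  · refine ⟨Q₂, Q₁, rfl, by rwa [h4], ?_⟩
    rw [← hZ, ← h1]
    simp only [dn, List.count_append, List.count_singleton_self]
  · simp at hQ

lemma image_insertMarks (m : ℕ) : Set.image insertMarks (refinedCuts m) = doubleCodes (m + 4) := by
  refine Set.Subset.antisymm (Set.image_subset_iff.2 fun t ht => insertMarks_mem ht) ?_
  rintro c ⟨hl, hdu, hN, P, Q, rfl, hP, hQ, hR, hS⟩
  obtain ⟨P₁, P₂, rfl, hlast, hPc⟩ := hR.exists_split hP hQ
    (fun h => by rw [h] at hl; simp at hl) hN hS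
  obtain ⟨Q₂, Q₁, rfl, hhead, hQc⟩ := hS.exists_split hQ (by simp at hPc ⊢; omega)
  refine ⟨((P₁, P₂), Q₂, Q₁), ?_, rfl⟩
  simp only [List.mem_append, List.mem_cons, not_or, List.length_append, List.length_cons,
    dn_append, up_append, dn_cons, up_cons, nonneg_append, nonneg_cons, Bool.toNat_true,
    Bool.toNat_false] at hP hQ hl hdu hN hPc hQc
  obtain ⟨⟨hN1, -, hN2⟩, -, hN3, -, hN4⟩ := hN
  refine ⟨by simp; omega, by simp [hP, hQ], by simp; omega, ?_, hlast, ?_, hhead, ?_⟩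
  · simp only [nonneg_append, dn_append, up_append]
    refine ⟨⟨hN1, fun p hp => ?_⟩, fun p hp => ?_, hN4.mono (by omega)⟩
    · obtain ⟨q, rfl⟩ := hp
      simp at hPc; omega
    · obtain ⟨q, rfl⟩ := hp
      simp at hQc; omega
  · simp; omega
  · simp; omega

/-! ### Motzkin words -/

/-- Motzkin words with letters encoded by pairs of bits. -/
def motzkinCodes (m : ℕ) : Set (List (Bool × Bool)) :=
  {l | l.length = m ∧ (true, true) ∉ l ∧ dn l = up l ∧ Nonneg 0 0 l}

/-- The pair of bits encoding a Motzkin step. -/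
def stepCode (a : Option Bool) : Bool × Bool := (a == some false, a == some true)

lemma stepCode_injective : Function.Injective stepCode := by decide

lemma dn_map_stepCode (l : List (Option Bool)) : dn (l.map stepCode) = l.count (some false) := by
  induction l with
  | nil => rfl
  | cons a l ih => rcases a with _ | _ | _ <;> simp [ih, stepCode, add_comm]

lemma up_map_stepCode (l : List (Option Bool)) : up (l.map stepCode) = l.count (some true) := by
  induction l with
  | nil => rfl
  | cons a l ih => rcases a with _ | _ | _ <;> simp [ih, stepCode, add_comm]

lemma exists_map_stepCode (l : List (Bool × Bool)) (h : (true, true) ∉ l) :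
    ∃ m, List.map stepCode m = l := by
  induction l with
  | nil => exact ⟨[], rfl⟩
  | cons a l ih =>
    simp only [List.mem_cons, not_or] at h
    obtain ⟨m, rfl⟩ := ih h.2
    rcases a with ⟨_ | _, _ | _⟩
    · exact ⟨none :: m, rfl⟩
    · exact ⟨some true :: m, rfl⟩
    · exact ⟨some false :: m, rfl⟩
    · simp at h

lemma ncard_motzkinCodes (m : ℕ) : (motzkinCodes m).ncard = motzkin m := by
  rw [motzkin, ← Set.InjOn.ncard_image (stepCode_injective.list_map.injOn)]
  congr 1
  ext l
  constructor
  · rintro ⟨hl, hB, hdu, hN⟩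
    obtain ⟨w, rfl⟩ := exists_map_stepCode l hB
    refine ⟨w, ⟨by simpa using hl, by rwa [dn_map_stepCode, up_map_stepCode] at hdu,
      fun p hp => ?_⟩, rfl⟩
    have := hN _ (hp.map stepCode)
    simpa [dn_map_stepCode, up_map_stepCode] using this
  · rintro ⟨w, ⟨hl, hdu, hN⟩, rfl⟩
    refine ⟨by simpa using hl, ?_, by rwa [dn_map_stepCode, up_map_stepCode], fun p hp => ?_⟩
    · simp [stepCode]
    · obtain ⟨q, hq, rfl⟩ := List.prefix_map_iff.1 hp
      simpa [dn_map_stepCode, up_map_stepCode] using hN q hq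

lemma ncard_cuts (m : ℕ) :
    {q : List (Bool × Bool) × List (Bool × Bool) | q.1 ++ q.2 ∈ motzkinCodes m}.ncard =
      (m + 1) * motzkin m := by
  have hinj : Set.InjOn (fun s : ℕ × List (Bool × Bool) => (s.2.take s.1, s.2.drop s.1))
      (Set.Iic m ×ˢ motzkinCodes m) := by
    rintro ⟨k, l⟩ ⟨hk, hl⟩ ⟨k', l'⟩ ⟨hk', hl'⟩ h
    simp only [Prod.mk.injEq, Set.mem_Iic] at *
    have hll : l = l' := by
      rw [← List.take_append_drop k l, h.1, h.2, List.take_append_drop]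
    have := congrArg List.length h.1
    rw [List.length_take, List.length_take, hl.1, hl'.1] at this
    exact ⟨by omega, hll⟩
  have himage : Set.image (fun s : ℕ × List (Bool × Bool) => (s.2.take s.1, s.2.drop s.1))
      (Set.Iic m ×ˢ motzkinCodes m) = {q | q.1 ++ q.2 ∈ motzkinCodes m} := by
    ext ⟨p, q⟩
    constructor
    · rintro ⟨⟨k, l⟩, ⟨-, hl⟩, h⟩
      rw [← h]
      simpa using hl
    · intro h
      refine ⟨(p.length, p ++ q), ⟨?_, h⟩, by simp⟩
      have := h.1
      simp at this ⊢; omega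
  rw [← himage, hinj.ncard_image, Set.ncard_prod, ncard_motzkinCodes, ← Finset.coe_Iic,
    Set.ncard_coe_finset, Nat.card_Iic]

lemma image_join (m : ℕ) :
    Set.image (fun t => (t.1.1 ++ t.1.2, t.2.1 ++ t.2.2)) (refinedCuts m) =
    {q | q.1 ++ q.2 ∈ motzkinCodes m} := by
  ext ⟨P, Q⟩
  constructor
  · rintro ⟨t, ⟨hl, hB, hdu, hN, -⟩, h⟩
    rw [← h]
    exact ⟨hl, hB, hdu, hN⟩
  · rintro ⟨hl, hB, hdu, hN⟩
    have hP := hN P (List.prefix_append _ _)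
    have hdu' := hdu
    simp only [dn_append, up_append] at hdu'
    obtain ⟨P₁, P₂, rfl, h1, h2⟩ := exists_split_up (dn P) P (by omega)
    obtain ⟨Q₂, Q₁, rfl, h3, h4⟩ := exists_split_dn (up Q) Q (by omega)
    exact ⟨((P₁, P₂), Q₂, Q₁), ⟨hl, hB, hdu, hN, h1, by simpa using h2, h3, by simpa using h4⟩, rfl⟩

lemma ncard_doubleCodes (m : ℕ) : (doubleCodes (m + 4)).ncard = (m + 1) * motzkin m := by
  rw [← image_insertMarks, (insertMarks_injOn m).ncard_image, ← (join_injOn m).ncard_image,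
    image_join, ncard_cuts]

/-! ### Small semilengths -/

lemma exists_ofFn_of_mem_dyckL {n k : ℕ} {w : List Bool} (hw : w ∈ dyckL n k) :
    ∃ v : Fin (2 * n) → Bool, w = List.ofFn v ∧ (w.count true = n ∧
      ∀ p ∈ w.inits, p.count false ≤ p.count true) ∧ LStat n w = k := by
  obtain ⟨⟨hl, ht, -, hp⟩, hL⟩ := hw
  rw [← hl]
  exact ⟨w.get, (List.ofFn_get w).symm, ⟨ht, by simpa using hp⟩, hL⟩

lemma dyckL_two_two : dyckL 2 2 = {[true, false, true, false]} := by
  have key : ∀ v : Fin (2 * 2) → Bool, ((List.ofFn v).count true = 2 ∧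
      ∀ p ∈ (List.ofFn v).inits, p.count false ≤ p.count true) ∧ LStat 2 (List.ofFn v) = 2 →
      List.ofFn v = [true, false, true, false] := by decide
  refine Set.Subset.antisymm (fun w hw => ?_) (Set.singleton_subset_iff.2 ?_)
  · obtain ⟨v, rfl, h⟩ := exists_ofFn_of_mem_dyckL hw
    exact key v h
  · refine ⟨⟨rfl, rfl, rfl, fun p hp => ?_⟩, by decide⟩
    rw [← List.mem_inits] at hp
    revert p
    decide

lemma dyckL_three_two : dyckL 3 2 = ∅ := by
  have key : ∀ v : Fin (2 * 3) → Bool, ¬ (((List.ofFn v).count true = 3 ∧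
      ∀ p ∈ (List.ofFn v).inits, p.count false ≤ p.count true) ∧ LStat 3 (List.ofFn v) = 2) := by
    decide
  refine Set.eq_empty_iff_forall_notMem.2 fun w hw => ?_
  obtain ⟨v, rfl, h⟩ := exists_ofFn_of_mem_dyckL hw
  exact key v h

/-- **Theorem (L = 2).** For `n ≥ 4`, `|𝒟ₙ²| = (n-3)·M_{n-4}`; moreover
`|𝒟₂²| = 1` and `|𝒟₃²| = 0`. -/
theorem dyck_L_eq_two_count :
    (∀ n : ℕ, 4 ≤ n → (dyckL n 2).ncard = (n - 3) * motzkin (n - 4)) ∧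
    (dyckL 2 2).ncard = 1 ∧ (dyckL 3 2).ncard = 0 := by
  refine ⟨fun n hn => ?_, by simp [dyckL_two_two], by simp [dyckL_three_two]⟩
  obtain ⟨m, rfl⟩ := Nat.exists_eq_add_of_le' hn
  rw [ncard_dyckL_two (by omega), ncard_doubleCodes]
  rfl
end

section
/- The generating function L_2(x) = Σ_{n≥0} |D_n^2| x^n satisfies L_2(x) = x^2 + x^4·(x·m(x))′, where m(x) = Σ_{n≥0} M_n x^n and ′ denotes the formal derivative of formal power series. -/
namespace Interlace

/-- Merge two lists of flags into a word: the runs of letters `b` and `!b` alternate, and a run ends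
as soon as the flag consumed by its last letter is `true`. The list `x` holds the flags of the
letters `b`, the list `y` those of the letters `!b`. -/
def interlace : Bool → List Bool → List Bool → List Bool
  | _, [], _ => []
  | b, false :: x, y => b :: interlace b x y
  | b, true :: x, y => b :: interlace (!b) y x
termination_by _ x y => x.length + y.length

/-- The list does not end in `false`. -/
def NoTrail (l : List Bool) : Prop := ∀ l', l ≠ l' ++ [false]

/-- The flag lists that arise from words over `Bool` which start with `b` and end in `false`. -/
structure Compat (b : Bool) (x y : List Bool) : Prop where
  left : NoTrail x
  right : NoTrail y
  count : x.count true = y.count true + if b then 0 else 1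

/-- The `j`-th `true` of the list (counted from `0`) immediately follows the previous one, or, for
`j = 0`, stands at the start of the list. -/
def Adj : ℕ → List Bool → Prop
  | _, [] => False
  | 0, x :: _ => x = true
  | j + 1, true :: l => Adj j l
  | j + 1, false :: l => Adj (j + 1) l

theorem noTrail_nil : NoTrail [] := by simp [NoTrail]

theorem NoTrail.of_cons {a : Bool} {l : List Bool} (h : NoTrail (a :: l)) : NoTrail l :=
  fun l' e => h (a :: l') (by simp [e])

theorem NoTrail.ne_nil {l : List Bool} (h : NoTrail (false :: l)) : l ≠ [] :=
  fun e => h [] (by simp [e])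

theorem NoTrail.cons_true {l : List Bool} (h : NoTrail l) : NoTrail (true :: l) := by
  rintro (_ | ⟨a, l'⟩) e
  · simp at e
  · simp only [List.cons_append, List.cons.injEq] at e
    exact h l' e.2

theorem NoTrail.cons_false {l : List Bool} (h : NoTrail l) (hl : l ≠ []) :
    NoTrail (false :: l) := by
  rintro (_ | ⟨a, l'⟩) e
  · simp at e
    exact hl e
  · simp only [List.cons_append, List.cons.injEq] at e
    exact h l' e.2

theorem noTrail_concat_true (l : List Bool) : NoTrail (l ++ [true]) := by
  intro l' e
  have := congrArg List.getLast? e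
  simp at this

theorem NoTrail.eq_nil_or_concat {l : List Bool} (h : NoTrail l) :
    l = [] ∨ ∃ l', l = l' ++ [true] := by
  rcases List.eq_nil_or_concat l with rfl | ⟨l', a, rfl⟩
  · exact Or.inl rfl
  · cases a
    · exact absurd (by simp) (h l')
    · exact Or.inr ⟨l', by simp⟩

theorem NoTrail.eq_nil {l : List Bool} (h : NoTrail l) (hc : l.count true = 0) : l = [] := by
  rcases h.eq_nil_or_concat with rfl | ⟨l', rfl⟩
  · rfl
  · simp at hc

theorem Compat.of_cons_false {b : Bool} {x y : List Bool} (h : Compat b (false :: x) y) :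
    Compat b x y :=
  ⟨h.left.of_cons, h.right, by simpa using h.count⟩

theorem Compat.of_cons_true {b : Bool} {x y : List Bool} (h : Compat b (true :: x) y) :
    Compat (!b) y x :=
  ⟨h.right, h.left.of_cons, by have := h.count; cases b <;> simp at this ⊢ <;> omega⟩

theorem Compat.of_nil {b : Bool} {y : List Bool} (h : Compat b [] y) : b = true ∧ y = [] := by
  have := h.count
  cases b
  · simp at this
  · exact ⟨rfl, h.right.eq_nil (by simpa using this.symm)⟩

theorem interlace_nil (b : Bool) (y : List Bool) : interlace b [] y = [] := by
  simp [interlace]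

theorem interlace_cons (b a : Bool) (x y : List Bool) :
    interlace b (a :: x) y = b :: if a then interlace (!b) y x else interlace b x y := by
  cases a <;> simp [interlace]

theorem exists_eq_interlace (w : List Bool) (hw : ∀ w', w ≠ w' ++ [true]) :
    ∃ b x y, w = interlace b x y ∧ Compat b x y ∧ (w = [] → b = true) := by
  induction w with
  | nil => exact ⟨true, [], [], by simp [interlace], ⟨noTrail_nil, noTrail_nil, by simp⟩, by simp⟩
  | cons c w ih =>
    obtain ⟨b, x, y, rfl, h, hb⟩ := ih fun w' e => hw (c :: w') (by simp [e])
    by_cases hc : c = b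
    · subst hc
      refine ⟨c, false :: x, y, by simp [interlace], ⟨h.left.cons_false ?_, h.right, ?_⟩, by simp⟩
      · rintro rfl
        rw [interlace_nil] at hw hb
        exact hw [] (by simp [hb rfl])
      · simpa using h.count
    · have hb' : (!c) = b := by cases b <;> cases c <;> simp_all
      refine ⟨c, true :: y, x, by simp [interlace, hb'], ⟨h.right.cons_true, h.left, ?_⟩, by simp⟩
      have := h.count
      subst hb'
      cases c <;> simp at this ⊢ <;> omega

theorem count_interlace {b : Bool} {x y : List Bool} (h : Compat b x y) :
    (interlace b x y).count b = x.length ∧ (interlace b x y).count (!b) = y.length := by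
  induction b, x, y using interlace.induct with
  | case1 b y =>
    obtain ⟨rfl, rfl⟩ := h.of_nil
    simp [interlace]
  | case2 b x y ih =>
    have := ih h.of_cons_false
    cases b <;> simp_all [interlace]
  | case3 b x y ih =>
    have := ih h.of_cons_true
    cases b <;> simp_all [interlace]

theorem interlace_injective {b : Bool} {x y x' y' : List Bool} (h : Compat b x y)
    (h' : Compat b x' y') (e : interlace b x y = interlace b x' y') : x = x' ∧ y = y' := by
  induction b, x, y using interlace.induct generalizing x' y' with
  | case1 b y =>
    obtain ⟨rfl, rfl⟩ := h.of_nil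
    rcases x' with _ | ⟨a, x'⟩
    · simp [h'.of_nil.2]
    · simp [interlace_nil, interlace_cons] at e
  | case2 b x y ih =>
    rcases x' with _ | ⟨_ | _, x'⟩
    · simp [interlace] at e
    · simp only [interlace, List.cons.injEq, true_and] at e
      simpa using ih h.of_cons_false h'.of_cons_false e
    · obtain ⟨a, x, rfl⟩ := List.exists_cons_of_ne_nil h.left.ne_nil
      rcases y' with _ | ⟨a', y'⟩ <;> simp [interlace, interlace_cons] at e
  | case3 b x y ih =>
    rcases x' with _ | ⟨_ | _, x'⟩
    · simp [interlace] at e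
    · obtain ⟨a, x', rfl⟩ := List.exists_cons_of_ne_nil h'.left.ne_nil
      rcases y with _ | ⟨a', y⟩ <;> simp [interlace, interlace_cons] at e
    · simp only [interlace, List.cons.injEq, true_and] at e
      have := ih h.of_cons_true h'.of_cons_true e
      simp [this]

theorem forall_prefix_cons {α : Type*} {P : List α → Prop} {a : α} {l : List α} :
    (∀ p, p <+: a :: l → P p) ↔ P [] ∧ ∀ p, p <+: l → P (a :: p) := by
  simp only [List.prefix_cons_iff]
  grind

theorem forall_prefix_append {α : Type*} {P : List α → Prop} {k l : List α} :
    (∀ p, p <+: k ++ l → P p) ↔ (∀ p, p <+: k → P p) ∧ ∀ p, p <+: l → P (k ++ p) := by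
  induction k generalizing P with
  | nil =>
    simp only [List.nil_append, List.prefix_nil, forall_eq]
    exact ⟨fun h => ⟨h _ List.nil_prefix, h⟩, fun h => h.2⟩
  | cons a k ih => simp only [List.cons_append, forall_prefix_cons, ih, and_assoc]

theorem forall_nat_iff {P : ℕ → Prop} : (∀ k, P k) ↔ P 0 ∧ ∀ k, P (k + 1) :=
  ⟨fun h => ⟨h 0, fun k => h (k + 1)⟩, fun h k => by cases k; exacts [h.1, h.2 _]⟩

theorem prefix_interlace_iff {b : Bool} {x y : List Bool} (hc : Compat b x y) (h : ℕ) :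
    (∀ p, p <+: interlace b x y → p.count false ≤ p.count true + h) ↔
      if b then ∀ k, (x.take k).count true ≤ (y.take (k + h)).count true
      else ∀ k, (y.take k).count true + 1 ≤ (x.take (k + h)).count true := by
  induction b, x, y using interlace.induct generalizing h with
  | case1 b y =>
    obtain ⟨rfl, rfl⟩ := hc.of_nil
    simp [interlace]
  | case2 b x y ih =>
    rw [interlace, forall_prefix_cons]
    cases b
    · rcases h with _ | h
      · refine iff_of_false (fun H => ?_) (fun H => ?_)
        · simpa using H.2 [] List.nil_prefix
        · simpa using H 0
      · simpa [← add_assoc, Nat.succ_le_iff] using ih hc.of_cons_false h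
    · rw [if_pos rfl, forall_nat_iff]
      simpa [add_right_comm _ 1 h, ← add_assoc] using ih hc.of_cons_false (h + 1)
  | case3 b x y ih =>
    rw [interlace, forall_prefix_cons]
    cases b
    · rcases h with _ | h
      · refine iff_of_false (fun H => ?_) (fun H => ?_)
        · simpa using H.2 [] List.nil_prefix
        · simpa using H 0
      · simpa [← add_assoc] using ih hc.of_cons_true h
    · rw [if_pos rfl, forall_nat_iff]
      simpa [add_right_comm _ 1 h, ← add_assoc, Nat.succ_le_iff] using ih hc.of_cons_true (h + 1)

theorem getD_findIdxs_append {b : Bool} {w₁ w₂ : List Bool} :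
    ((w₁ ++ b :: w₂).findIdxs (· == b)).getD (w₁.count b) 0 = w₁.length := by
  rw [List.findIdxs_append, List.getD_append_right _ _ _ _ (by simp [List.count])]
  simp [List.count]

theorem count_gap (b : Bool) (w₁ w₂ : List Bool) (r : ℕ) :
    let w := w₁ ++ b :: (List.replicate r (!b) ++ b :: w₂)
    ((w.take ((w.findIdxs (· == b)).getD (w₁.count b + 1) 0)).drop
      ((w.findIdxs (· == b)).getD (w₁.count b) 0 + 1)).count (!b) = r := by
  intro w
  have h := getD_findIdxs_append (b := b) (w₁ := w₁ ++ b :: List.replicate r (!b)) (w₂ := w₂)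
  have hc : (w₁ ++ b :: List.replicate r (!b)).count b = w₁.count b + 1 := by
    simp [List.count_replicate]
  have hw : w₁ ++ b :: List.replicate r (!b) ++ b :: w₂ = w := by simp [w]
  have ht : w.take (w₁ ++ b :: List.replicate r (!b)).length =
      (w₁ ++ [b]) ++ List.replicate r (!b) := by
    rw [← hw, List.take_left']
    · simp
    · rfl
  rw [hc, hw] at h
  rw [h, getD_findIdxs_append, ht, List.drop_left' (by simp), List.count_replicate_self]

theorem exists_run {b : Bool} {x y : List Bool} (hx : x ≠ []) (hy : 0 < y.count true) :
    ∃ r w, interlace (!b) y x = List.replicate r (!b) ++ b :: w ∧ 0 < r ∧ (r = 1 ↔ Adj 0 y) := by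
  induction y with
  | nil => simp at hy
  | cons a y ih =>
    cases a
    · obtain ⟨r, w, h, hr, -⟩ := ih (by simpa using hy)
      refine ⟨r + 1, w, by simp [interlace, h, List.replicate_succ], by omega, ?_⟩
      simp [Adj]
      omega
    · obtain ⟨a, x, rfl⟩ := List.exists_cons_of_ne_nil hx
      exact ⟨1, _, by rw [interlace, Bool.not_not, interlace_cons]; rfl, one_pos, by simp [Adj]⟩

/-- Some letter `b` of `w`, preceded by exactly `i` letters `b`, and the next letter `b` are
separated by `r` letters `!b`. -/
def HasGap (b : Bool) (w : List Bool) (i r : ℕ) : Prop :=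
  ∃ w₁ w₂, w = w₁ ++ b :: (List.replicate r (!b) ++ b :: w₂) ∧ w₁.count b = i

theorem HasGap.cons_self {b : Bool} {w : List Bool} {i r : ℕ} (h : HasGap b w i r) :
    HasGap b (b :: w) (i + 1) r := by
  obtain ⟨w₁, w₂, rfl, rfl⟩ := h
  exact ⟨b :: w₁, w₂, by simp, by simp⟩

theorem HasGap.cons_not {b : Bool} {w : List Bool} {i r : ℕ} (h : HasGap (!b) w i r) :
    HasGap (!b) (b :: w) i r := by
  obtain ⟨w₁, w₂, rfl, rfl⟩ := h
  exact ⟨b :: w₁, w₂, by simp, by simp⟩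

theorem HasGap.rStat_eq {w : List Bool} {i r : ℕ} (h : HasGap true w i r) :
    rStat w (i + 1) = r := by
  obtain ⟨w₁, w₂, rfl, rfl⟩ := h
  exact count_gap true w₁ w₂ r

theorem HasGap.sStat_eq {w : List Bool} {i r : ℕ} (h : HasGap false w i r) :
    sStat w (i + 1) = r := by
  obtain ⟨w₁, w₂, rfl, rfl⟩ := h
  exact count_gap false w₁ w₂ r

theorem exists_hasGap (b : Bool) (x y : List Bool) :
    (∀ a z x', x = a ++ z :: x' → x' ≠ [] → (a ++ [z]).count true ≤ y.count true →
      ∃ r, HasGap b (interlace b x y) a.length r ∧ (0 < r ↔ z = true) ∧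
        (z = true → (r = 1 ↔ Adj (a.count true) y))) ∧
    (∀ a z y', y = a ++ z :: y' → y' ≠ [] → (a ++ [z]).count true + 1 ≤ x.count true →
      ∃ r, HasGap (!b) (interlace b x y) a.length r ∧ (0 < r ↔ z = true) ∧
        (z = true → (r = 1 ↔ Adj (a.count true + 1) x))) := by
  induction b, x, y using interlace.induct with
  | case1 b y => simp
  | case2 b x y ih =>
    rw [interlace]
    constructor
    · rintro (_ | ⟨a₀, a⟩) z x' e hx' hc
      · simp only [List.nil_append, List.cons.injEq] at e
        obtain ⟨rfl, rfl⟩ := e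
        obtain ⟨c, x, rfl⟩ := List.exists_cons_of_ne_nil hx'
        exact ⟨0, ⟨[], _, by rw [interlace_cons]; rfl, by simp⟩, by simp, by simp⟩
      · simp only [List.cons_append, List.cons.injEq] at e
        obtain ⟨rfl, rfl⟩ := e
        obtain ⟨r, h, h'⟩ := ih.1 a z x' rfl hx' (by simpa using hc)
        exact ⟨r, h.cons_self, by simpa using h'⟩
    · rintro a z y' rfl hy' hc
      obtain ⟨r, h, h'⟩ := ih.2 a z y' rfl hy' (by simpa using hc)
      exact ⟨r, h.cons_not, by simpa [Adj] using h'⟩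
  | case3 b x y ih =>
    rw [interlace]
    constructor
    · rintro (_ | ⟨a₀, a⟩) z x' e hx' hc
      · simp only [List.nil_append, List.cons.injEq] at e
        obtain ⟨rfl, rfl⟩ := e
        obtain ⟨r, w, h, hr, hr'⟩ := exists_run (b := b) hx' (by simpa using hc)
        exact ⟨r, ⟨[], w, by simp [h], by simp⟩, by simpa using hr, by simpa using hr'⟩
      · simp only [List.cons_append, List.cons.injEq] at e
        obtain ⟨rfl, rfl⟩ := e
        obtain ⟨r, h, h'⟩ := ih.2 a z x' rfl hx'
          (by simpa [Nat.succ_le_iff, add_right_comm] using hc)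
        rw [Bool.not_not] at h
        exact ⟨r, h.cons_self, by simpa using h'⟩
    · rintro a z y' rfl hy' hc
      obtain ⟨r, h, h'⟩ := ih.1 a z y' rfl hy' (by simpa using hc)
      exact ⟨r, h.cons_not, by simpa [Adj] using h'⟩

theorem choose_add_eq_two_iff {r s : ℕ} : (r + s).choose r = 2 ↔ r = 1 ∧ s = 1 := by
  refine ⟨fun h => ?_, by rintro ⟨rfl, rfl⟩; rfl⟩
  rcases r with _ | r
  · simp at h
  rcases s with _ | s
  · simp at h
  have h₁ : (r + 1 + s).choose r ≥ 1 := Nat.choose_pos (by omega)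
  have h₂ : (r + 1 + s).choose (r + 1) ≥ 1 := Nat.choose_pos (by omega)
  rw [← add_assoc, Nat.choose_succ_succ'] at h
  have h₃ := Nat.choose_eq_one_iff.1 (show (r + 1 + s).choose r = 1 by omega)
  have h₄ := Nat.choose_eq_one_iff.1 (show (r + 1 + s).choose (r + 1) = 1 by omega)
  omega

theorem choose_add_eq_one_iff {r s : ℕ} : (r + s).choose r = 1 ↔ r = 0 ∨ s = 0 := by
  rw [Nat.choose_eq_one_iff]
  omega

theorem prod_eq_two_iff {ι : Type*} [DecidableEq ι] {I : Finset ι} {f : ι → ℕ} :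
    ∏ i ∈ I, f i = 2 ↔ ∃ i ∈ I, f i = 2 ∧ ∀ j ∈ I, j ≠ i → f j = 1 := by
  constructor
  · intro h
    obtain ⟨i, hi, hd⟩ := (Nat.prime_two.prime.dvd_finsetProd_iff f).1 h.symm.dvd
    have h' := Finset.mul_prod_erase I f hi
    rw [h] at h'
    obtain ⟨k, hk⟩ := hd
    have h₁ : k * ∏ j ∈ I.erase i, f j = 1 := by
      rw [hk, mul_assoc] at h'
      omega
    obtain ⟨rfl, h₂⟩ := mul_eq_one.1 h₁
    refine ⟨i, hi, hk, fun j hj hji => ?_⟩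
    exact Finset.prod_eq_one_iff.1 h₂ j (Finset.mem_erase.2 ⟨hji, hj⟩)
  · rintro ⟨i, hi, h2, h1⟩
    rw [← Finset.mul_prod_erase I f hi, h2, Finset.prod_eq_one fun j hj =>
      h1 j (Finset.mem_of_mem_erase hj) (Finset.ne_of_mem_erase hj),
      mul_one]

theorem LStat_eq_two_iff {n : ℕ} {w : List Bool} :
    LStat n w = 2 ↔ ∃ i ∈ Finset.Icc 1 (n - 1), (rStat w i = 1 ∧ sStat w i = 1) ∧
      ∀ j ∈ Finset.Icc 1 (n - 1), j ≠ i → rStat w j = 0 ∨ sStat w j = 0 := by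
  simp only [LStat, prod_eq_two_iff, choose_add_eq_two_iff, choose_add_eq_one_iff]

/-- In every prefix, the first components contain at most as many `true` as the second ones. -/
def Dominated (c : List (Bool × Bool)) : Prop :=
  ∀ p, p <+: c → (p.map Prod.fst).count true ≤ (p.map Prod.snd).count true

/-- The word whose `i`-th up (down) step is the last one of its run if and only if the first
(second) component of the `i`-th entry is `true`. -/
def wordOf (c : List (Bool × Bool)) : List Bool :=
  interlace true (c.map Prod.fst) (c.map Prod.snd)

/-- The columns that encode a Dyck word. -/
structure IsDyckCols (c : List (Bool × Bool)) : Prop where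
  compat : Compat true (c.map Prod.fst) (c.map Prod.snd)
  dominated : Dominated c

theorem dominated_iff_take {c : List (Bool × Bool)} : Dominated c ↔
    ∀ k, ((c.map Prod.fst).take k).count true ≤ ((c.map Prod.snd).take k).count true := by
  simp only [← List.map_take]
  constructor
  · exact fun h k => h _ (List.take_prefix k c)
  · intro h p hp
    rw [List.prefix_iff_eq_take.1 hp]
    exact h _

theorem prefix_wordOf_iff {c : List (Bool × Bool)}
    (hc : Compat true (c.map Prod.fst) (c.map Prod.snd)) :
    (∀ p, p <+: wordOf c → p.count false ≤ p.count true) ↔ Dominated c := by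
  simpa [dominated_iff_take, wordOf] using prefix_interlace_iff hc 0

theorem IsDyckCols.isDyckWord {c : List (Bool × Bool)} (h : IsDyckCols c) :
    IsDyckWord c.length (wordOf c) := by
  have hc := count_interlace h.compat
  simp only [Bool.not_true, List.length_map] at hc
  refine ⟨?_, hc.1, hc.2, (prefix_wordOf_iff h.compat).2 h.dominated⟩
  have := List.count_true_add_count_false (wordOf c)
  unfold wordOf at *
  omega

theorem exists_isDyckCols {n : ℕ} {w : List Bool} (h : IsDyckWord n w) :
    ∃ c, c.length = n ∧ IsDyckCols c ∧ w = wordOf c := by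
  obtain ⟨-, ht, hf, hp⟩ := h
  obtain ⟨b, x, y, rfl, hc, hb⟩ := exists_eq_interlace w (by
    rintro w' rfl
    have := hp w' (List.prefix_append _ _)
    simp at ht hf
    omega)
  obtain rfl : b = true := by
    rcases x with _ | ⟨a, x⟩
    · exact hb (interlace_nil _ _)
    · rw [interlace_cons] at hp
      have := hp [b] (by simp)
      cases b <;> simp at this ⊢
  have hl := count_interlace hc
  simp only [Bool.not_true, ht, hf] at hl
  have h₁ : (x.zip y).map Prod.fst = x := List.map_fst_zip (by omega)
  have h₂ : (x.zip y).map Prod.snd = y := List.map_snd_zip (by omega)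
  have hw : wordOf (x.zip y) = interlace true x y := by rw [wordOf, h₁, h₂]
  have hc' : Compat true ((x.zip y).map Prod.fst) ((x.zip y).map Prod.snd) := by rwa [h₁, h₂]
  refine ⟨x.zip y, by simp; omega, ⟨hc', ?_⟩, hw.symm⟩
  rw [← prefix_wordOf_iff hc', hw]
  exact hp

theorem wordOf_injective {c c' : List (Bool × Bool)} (h : IsDyckCols c) (h' : IsDyckCols c')
    (e : wordOf c = wordOf c') : c = c' := by
  obtain ⟨h₁, h₂⟩ := interlace_injective h.compat h'.compat e
  rw [← List.zip_unzip c, ← List.zip_unzip c']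
  simp [List.unzip_eq_map, h₁, h₂]

section Stats

variable {a c' : List (Bool × Bool)} {z : Bool × Bool}

theorem rStat_wordOf (h : IsDyckCols (a ++ z :: c')) (hc : c' ≠ []) :
    (0 < rStat (wordOf (a ++ z :: c')) (a.length + 1) ↔ z.1 = true) ∧
      (z.1 = true → (rStat (wordOf (a ++ z :: c')) (a.length + 1) = 1 ↔
        Adj ((a.map Prod.fst).count true) ((a ++ z :: c').map Prod.snd))) := by
  have hcount := h.compat.count
  obtain ⟨r, hr, hr'⟩ := (exists_hasGap true ((a ++ z :: c').map Prod.fst)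
    ((a ++ z :: c').map Prod.snd)).1 (a.map Prod.fst) z.1 (c'.map Prod.fst) (by simp) (by simpa)
    (by simp [List.count_cons] at hcount ⊢; omega)
  rw [List.length_map] at hr
  rwa [wordOf, hr.rStat_eq]

theorem sStat_wordOf (h : IsDyckCols (a ++ z :: c')) (hc : c' ≠ []) :
    (0 < sStat (wordOf (a ++ z :: c')) (a.length + 1) ↔ z.2 = true) ∧
      (z.2 = true → (sStat (wordOf (a ++ z :: c')) (a.length + 1) = 1 ↔
        Adj ((a.map Prod.snd).count true + 1) ((a ++ z :: c').map Prod.fst))) := by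
  have hcount := h.compat.count
  have hpos : 0 < (c'.map Prod.snd).count true := by
    rcases List.eq_nil_or_concat c' with rfl | ⟨c'', y, rfl⟩
    · exact absurd rfl hc
    · rcases y with ⟨y₁, _ | _⟩
      · exact absurd (by simp) (h.compat.right (a.map Prod.snd ++ z.2 :: c''.map Prod.snd))
      · simp
  obtain ⟨r, hr, hr'⟩ := (exists_hasGap true ((a ++ z :: c').map Prod.fst)
    ((a ++ z :: c').map Prod.snd)).2 (a.map Prod.snd) z.2 (c'.map Prod.snd) (by simp) (by simpa)
    (by simp [List.count_cons] at hcount ⊢; omega)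
  rw [List.length_map] at hr
  rwa [wordOf, hr.sStat_eq]

end Stats

theorem exists_split {l : List (Bool × Bool)} {i : ℕ} (hi : i ∈ Finset.Icc 1 (l.length - 1)) :
    ∃ a z c', l = a ++ z :: c' ∧ c' ≠ [] ∧ i = a.length + 1 := by
  rw [Finset.mem_Icc] at hi
  have h : i - 1 < l.length := by omega
  refine ⟨l.take (i - 1), l[i - 1], l.drop i, ?_, ?_, by simp; omega⟩
  · have := List.take_append_drop (i - 1) l
    rw [List.drop_eq_getElem_cons h, show i - 1 + 1 = i by omega] at this
    exact this.symm
  · rw [← List.length_pos_iff, List.length_drop]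
    omega

/-- Columns with exactly one entry `(true, true)` apart from the last one. -/
def starred (p q : List (Bool × Bool)) : List (Bool × Bool) :=
  p ++ (true, true) :: (q ++ [(true, true)])

theorem eq_of_starred_eq {p q a c' : List (Bool × Bool)} (hp : (true, true) ∉ p)
    (hq : (true, true) ∉ q) (hc : c' ≠ []) (e : starred p q = a ++ (true, true) :: c') :
    a = p := by
  rcases List.append_eq_append_iff.1 e with ⟨a', rfl, e'⟩ | ⟨a', rfl, e'⟩
  · rcases a' with _ | ⟨z, a'⟩
    · simp
    · obtain ⟨c, z', rfl⟩ := (List.eq_nil_or_concat c').resolve_left hc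
      simp only [List.cons_append, List.cons.injEq, List.concat_eq_append] at e'
      rw [← List.cons_append, ← List.append_assoc] at e'
      exact absurd (by simp [List.append_inj_left' e'.2 rfl]) hq
  · rcases a' with _ | ⟨z, a'⟩
    · simp
    · simp only [List.cons_append, List.cons.injEq] at e'
      simp [← e'.1] at hp

theorem mem_dyckL_two_iff {n : ℕ} {w : List Bool} : w ∈ dyckL n 2 ↔
    ∃ p q, (p.length + q.length + 2 = n ∧ (true, true) ∉ p ∧ (true, true) ∉ q) ∧
      IsDyckCols (starred p q) ∧ w = wordOf (starred p q) ∧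
      Adj ((p.map Prod.fst).count true) ((starred p q).map Prod.snd) ∧
      Adj ((p.map Prod.snd).count true + 1) ((starred p q).map Prod.fst) := by
  constructor
  · rintro ⟨hw, hL⟩
    obtain ⟨c, rfl, hc, rfl⟩ := exists_isDyckCols hw
    obtain ⟨i, hi, ⟨hr, hs⟩, hne⟩ := LStat_eq_two_iff.1 hL
    obtain ⟨p, ⟨z₁, z₂⟩, c', rfl, hc', rfl⟩ := exists_split hi
    obtain rfl : z₁ = true := (rStat_wordOf hc hc').1.1 (by omega)
    obtain rfl : z₂ = true := (sStat_wordOf hc hc').1.1 (by omega)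
    rcases List.eq_nil_or_concat c' with rfl | ⟨q, ⟨y₁, y₂⟩, rfl⟩
    · exact absurd rfl hc'
    obtain rfl : y₁ = true := by
      cases y₁
      · exact absurd (by simp) (hc.compat.left (p.map Prod.fst ++ true :: q.map Prod.fst))
      · rfl
    obtain rfl : y₂ = true := by
      cases y₂
      · exact absurd (by simp) (hc.compat.right (p.map Prod.snd ++ true :: q.map Prod.snd))
      · rfl
    have key : ∀ a c', p ++ (true, true) :: (q ++ [(true, true)]) = a ++ (true, true) :: c' →
        c' ≠ [] → a.length = p.length := by
      intro a c' e hc₀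
      by_contra hlen
      have hj := hne (a.length + 1) (by
        have := congrArg List.length e
        have := List.length_pos_iff.2 hc₀
        simp at *
        omega) (by omega)
      rw [List.concat_eq_append, e] at hj
      have hca : IsDyckCols (a ++ (true, true) :: c') := by
        rwa [← e, ← List.concat_eq_append]
      have := (rStat_wordOf hca hc₀).1.2 rfl
      have := (sStat_wordOf hca hc₀).1.2 rfl
      omega
    rw [List.concat_eq_append] at *
    refine ⟨p, q, ⟨by simp; omega, fun hp => ?_, fun hq => ?_⟩, hc, rfl,
      ((rStat_wordOf hc hc').2 rfl).1 hr, ((sStat_wordOf hc hc').2 rfl).1 hs⟩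
    · obtain ⟨a, b, rfl⟩ := List.append_of_mem hp
      have := key a _ (by simp; rfl) (by simp)
      simp at this
    · obtain ⟨a, b, rfl⟩ := List.append_of_mem hq
      have := key (p ++ (true, true) :: a) (b ++ [(true, true)]) (by simp) (by simp)
      simp at this
  · rintro ⟨p, q, ⟨rfl, hp, hq⟩, hc, rfl, hr, hs⟩
    have hlen : (starred p q).length = p.length + q.length + 2 := by simp [starred]; omega
    refine ⟨hlen ▸ hc.isDyckWord, LStat_eq_two_iff.2 ⟨p.length + 1, by simp,
      ⟨((rStat_wordOf hc (by simp)).2 rfl).2 hr, ((sStat_wordOf hc (by simp)).2 rfl).2 hs⟩, ?_⟩⟩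
    intro j hj hne
    rw [← hlen] at hj
    obtain ⟨a, z, c', e, hc', rfl⟩ := exists_split hj
    rw [e] at hc ⊢
    by_contra hcon
    have h₁ := (rStat_wordOf hc hc').1.1 (by omega)
    have h₂ := (sStat_wordOf hc hc').1.1 (by omega)
    obtain rfl : z = (true, true) := Prod.ext h₁ h₂
    exact hne (by rw [eq_of_starred_eq hp hq hc' e])

theorem Adj.lt_count {j : ℕ} {l : List Bool} (h : Adj j l) : j < l.count true := by
  induction l generalizing j with
  | nil => simp [Adj] at h
  | cons x l ih =>
    rcases j with _ | j
    · simp_all [Adj]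
    · cases x <;> simp only [Adj] at h <;> have := ih h <;> simp <;> omega

theorem adj_append_of_lt {j : ℕ} {k l : List Bool} (h : j < k.count true) :
    Adj j (k ++ l) ↔ Adj j k := by
  induction k generalizing j with
  | nil => simp at h
  | cons x k ih =>
    rcases j with _ | j
    · simp [Adj]
    · cases x <;> simp at h <;> simpa [Adj] using ih (by omega)

theorem adj_append_of_ge {j : ℕ} {k l : List Bool} :
    Adj (k.count true + j + 1) (k ++ l) ↔ Adj (j + 1) l := by
  induction k with
  | nil => simp
  | cons x k ih => cases x <;> simpa [Adj, add_right_comm _ 1] using ih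

theorem adj_count_append {k l : List Bool} :
    Adj (k.count true) (k ++ true :: l) ↔ NoTrail k := by
  induction k with
  | nil => simp [Adj, noTrail_nil]
  | cons x k ih =>
    cases x
    · rw [List.count_cons_of_ne (by simp), List.cons_append]
      rcases hk : k.count true with _ | j
      · refine iff_of_false (by simp [Adj]) fun h => h.ne_nil (h.of_cons.eq_nil hk)
      · rw [Adj, ← hk, ih]
        exact ⟨fun h => h.cons_false (by rintro rfl; simp at hk), NoTrail.of_cons⟩
    · rw [List.count_cons_self, List.cons_append, Adj, ih]
      exact ⟨NoTrail.cons_true, NoTrail.of_cons⟩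

theorem adj_succ_iff {j : ℕ} {l : List Bool} :
    Adj (j + 1) l ↔ ∃ a b, l = a ++ true :: true :: b ∧ a.count true = j := by
  induction l generalizing j with
  | nil => simp [Adj]
  | cons x l ih =>
    cases x
    · rw [Adj, ih]
      constructor
      · rintro ⟨a, b, rfl, rfl⟩
        exact ⟨false :: a, b, by simp, by simp⟩
      · rintro ⟨_ | ⟨x, a⟩, b, e, rfl⟩
        · simp at e
        · simp only [List.cons_append, List.cons.injEq] at e
          exact ⟨a, b, e.2, by simp [← e.1]⟩
    · rw [Adj]
      rcases j with _ | j
      · constructor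
        · intro h
          rcases l with _ | ⟨x, l⟩ <;> simp only [Adj] at h
          exact ⟨[], l, by simp [h], rfl⟩
        · rintro ⟨_ | ⟨x, a⟩, b, e, h⟩
          · simp only [List.nil_append, List.cons.injEq, true_and] at e
            simp [e, Adj]
          · simp only [List.cons_append, List.cons.injEq] at e
            simp [← e.1] at h
      · rw [ih]
        constructor
        · rintro ⟨a, b, rfl, rfl⟩
          exact ⟨true :: a, b, by simp, by simp⟩
        · rintro ⟨_ | ⟨x, a⟩, b, e, h⟩
          · simp at h
          · simp only [List.cons_append, List.cons.injEq] at e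
            exact ⟨a, b, e.2, by simpa [← e.1] using h⟩

theorem adj_reverse {j k : ℕ} {l : List Bool} (h : l.count true = j + k + 1) :
    Adj (j + 1) (l ++ [true]) ↔ Adj k l.reverse := by
  have hk : Adj k l.reverse ↔ Adj (k + 1) (true :: l.reverse) := by rw [Adj]
  rw [hk, adj_succ_iff, adj_succ_iff]
  constructor
  · rintro ⟨a, b, e, rfl⟩
    refine ⟨b.reverse, a.reverse, by simpa using congrArg List.reverse e, ?_⟩
    have := congrArg (List.count true) e
    simp at this ⊢
    omega
  · rintro ⟨a, b, e, rfl⟩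
    refine ⟨b.reverse, a.reverse, by simpa using congrArg List.reverse e, ?_⟩
    have := congrArg (List.count true) e
    simp at this ⊢
    omega

/-- The column of a Motzkin step: its components flag a down step and an up step. -/
def column : Option Bool → Bool × Bool
  | none => (false, false)
  | some b => (!b, b)

theorem column_injective : Function.Injective column := by
  rintro (_ | _ | _) (_ | _ | _) <;> simp [column]

theorem exists_map_column {c : List (Bool × Bool)} (h : (true, true) ∉ c) :
    ∃ p : List (Option Bool), c = p.map column := by
  induction c with
  | nil => exact ⟨[], rfl⟩
  | cons z c ih =>
    obtain ⟨p, rfl⟩ := ih fun hc => h (List.mem_cons_of_mem _ hc)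
    obtain ⟨o, rfl⟩ : ∃ o, z = column o := by
      rcases z with ⟨_ | _, _ | _⟩
      exacts [⟨none, rfl⟩, ⟨some true, rfl⟩, ⟨some false, rfl⟩, absurd (by simp) h]
    exact ⟨o :: p, rfl⟩

theorem notMem_map_column (p : List (Option Bool)) : (true, true) ∉ p.map column := by
  simp only [List.mem_map, not_exists, not_and]
  rintro (_ | _ | _) - <;> simp [column]

/-- The flags of the up steps. -/
def ups (p : List (Option Bool)) : List Bool := (p.map column).map Prod.snd

/-- The flags of the down steps. -/
def downs (p : List (Option Bool)) : List Bool := (p.map column).map Prod.fst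

theorem count_ups (p : List (Option Bool)) : (ups p).count true = p.count (some true) := by
  induction p with
  | nil => rfl
  | cons z p ih => rcases z with _ | _ | _ <;> simp_all [ups, column]

theorem count_downs (p : List (Option Bool)) : (downs p).count true = p.count (some false) := by
  induction p with
  | nil => rfl
  | cons z p ih => rcases z with _ | _ | _ <;> simp_all [downs, column]

/-- Prefixes of Motzkin paths. -/
def IsMotzkinPrefix (p : List (Option Bool)) : Prop :=
  ∀ l, l <+: p → l.count (some false) ≤ l.count (some true)

/-- Reflection of a path in a vertical line. -/
def mirror (p : List (Option Bool)) : List (Option Bool) := (p.map (Option.map not)).reverse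

theorem mirror_mirror (p : List (Option Bool)) : mirror (mirror p) = p := by
  simp [mirror, Function.comp_def]

theorem count_mirror (b : Bool) (p : List (Option Bool)) :
    (mirror p).count (some b) = p.count (some (!b)) := by
  rw [mirror, List.count_reverse]
  induction p with
  | nil => rfl
  | cons z p ih => rcases z with _ | _ | _ <;> cases b <;> simp_all

theorem ups_mirror (p : List (Option Bool)) : ups (mirror p) = (downs p).reverse := by
  simp only [ups, mirror, downs, List.map_reverse, List.map_map, List.reverse_inj]
  refine List.map_congr_left ?_
  rintro (_ | _ | _) - <;> simp [column]

theorem mirror_append (p q : List (Option Bool)) : mirror (p ++ q) = mirror q ++ mirror p := by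
  simp [mirror]

theorem isMotzkinWord_append_iff {p q : List (Option Bool)} : IsMotzkinWord (p ++ q) ↔
    (p ++ q).count (some false) = (p ++ q).count (some true) ∧
      IsMotzkinPrefix p ∧ IsMotzkinPrefix (mirror q) := by
  rw [IsMotzkinWord, forall_prefix_append]
  refine and_congr_right fun hb => and_congr_right fun _ => ?_
  simp only [List.count_append] at hb ⊢
  constructor
  · rintro h l ⟨k, hk⟩
    have e : q = mirror k ++ mirror l := by rw [← mirror_append, hk, mirror_mirror]
    have := h (mirror k) (by simp [e])
    rw [e] at hb
    simp only [List.count_append, count_mirror, Bool.not_true, Bool.not_false] at *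
    omega
  · rintro h l ⟨k, rfl⟩
    have := h (mirror k) (by simp [mirror_append])
    simp only [List.count_append, count_mirror, Bool.not_true, Bool.not_false] at *
    omega

/-- The columns obtained from two paths by inserting `(true, true)` between them and at the end. -/
def columns (p q : List (Option Bool)) : List (Bool × Bool) :=
  starred (p.map column) (q.map column)

theorem map_fst_columns (p q : List (Option Bool)) :
    (columns p q).map Prod.fst = downs p ++ true :: (downs q ++ [true]) := by
  simp [columns, starred, downs]

theorem map_snd_columns (p q : List (Option Bool)) :
    (columns p q).map Prod.snd = ups p ++ true :: (ups q ++ [true]) := by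
  simp [columns, starred, ups]

theorem forall_prefix_map {α β : Type*} {f : α → β} {P : List β → Prop} {l : List α} :
    (∀ p, p <+: l.map f → P p) ↔ ∀ p, p <+: l → P (p.map f) := by
  simp only [List.prefix_map_iff]
  grind

theorem isDyckCols_columns_iff {p q : List (Option Bool)} :
    IsDyckCols (columns p q) ↔ IsMotzkinWord (p ++ q) := by
  have h₁ : Compat true ((columns p q).map Prod.fst) ((columns p q).map Prod.snd) ↔
      (p ++ q).count (some false) = (p ++ q).count (some true) := by
    rw [map_fst_columns, map_snd_columns]
    constructor
    · intro h
      simpa [count_ups, count_downs, ← add_assoc] using h.count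
    · intro h
      refine ⟨?_, ?_, by simpa [count_ups, count_downs, ← add_assoc] using h⟩
      · simpa using noTrail_concat_true (downs p ++ true :: downs q)
      · simpa using noTrail_concat_true (ups p ++ true :: ups q)
  have hd : ∀ p, (List.map Prod.fst (List.map column p)).count true = p.count (some false) :=
    count_downs
  have hu : ∀ p, (List.map Prod.snd (List.map column p)).count true = p.count (some true) :=
    count_ups
  have h₂ : (p ++ q).count (some false) = (p ++ q).count (some true) →
      (Dominated (columns p q) ↔
      ∀ l, l <+: p ++ q → l.count (some false) ≤ l.count (some true)) := by
    intro hb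
    rw [Dominated, columns, starred]
    simp only [forall_prefix_append, forall_prefix_cons, forall_prefix_map]
    simp only [List.prefix_nil, forall_eq, List.map_append, List.map_cons, List.map_nil,
      List.append_nil, List.count_append, List.count_cons_self, List.count_nil, hd, hu] at hb ⊢
    constructor
    · exact fun h => ⟨h.1, fun l hl => by have := h.2.2.1 l hl; omega⟩
    · intro h
      have := h.1 p List.prefix_rfl
      exact ⟨h.1, by omega, fun l hl => by have := h.2 l hl; omega, by omega, by omega⟩
  rw [IsMotzkinWord, ← h₁]
  exact ⟨fun h => ⟨h.1, (h₂ (h₁.1 h.1)).1 h.2⟩, fun h => ⟨h.1, (h₂ (h₁.1 h.1)).2 h.2⟩⟩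

theorem adj_columns_iff {p q : List (Option Bool)} (h : IsMotzkinWord (p ++ q)) :
    (Adj ((downs p).count true) ((columns p q).map Prod.snd) ∧
      Adj ((ups p).count true + 1) ((columns p q).map Prod.fst)) ↔
    (p = [] ∧ q = []) ∨ (Adj (p.count (some false)) (ups p) ∧
      Adj ((mirror q).count (some false)) (ups (mirror q))) := by
  obtain ⟨hb, hp, hq⟩ := isMotzkinWord_append_iff.1 h
  have hle := hp p List.prefix_rfl
  rw [map_fst_columns, map_snd_columns, count_mirror, ups_mirror, Bool.not_false]
  simp only [List.count_append] at hb
  rcases hle.eq_or_lt with heq | hlt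
  · have e : (downs p).count true = (ups p).count true := by rw [count_ups, count_downs, heq]
    have hge := adj_append_of_ge (j := 0) (k := downs p) (l := true :: (downs q ++ [true]))
    rw [add_zero, zero_add, Adj] at hge
    rw [e, adj_count_append, ← e, hge]
    constructor
    · rintro ⟨h₁, h₂⟩
      refine Or.inl ⟨?_, ?_⟩
      · rcases List.eq_nil_or_concat p with rfl | ⟨p, z, rfl⟩
        · rfl
        · exfalso
          have := hp p (by simp)
          rcases z with _ | _ | _
          · exact h₁ (ups p) (by simp [ups, column])
          · exact h₁ (ups p) (by simp [ups, column])
          · simp at heq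
            omega
      · rcases q with _ | ⟨z, q⟩
        · rfl
        · exfalso
          have := h.2 (p ++ [z]) (by simp)
          rcases z with _ | _ | _ <;> simp [downs, column, Adj] at h₂ this
          omega
    · rintro (⟨rfl, rfl⟩ | ⟨h₁, -⟩)
      · simp [ups, downs, Adj, noTrail_nil]
      · have := h₁.lt_count
        rw [count_ups] at this
        omega
  · obtain ⟨j, hj⟩ := Nat.exists_eq_add_of_lt hlt
    have hd : downs p ++ true :: (downs q ++ [true]) =
        (downs p ++ [true]) ++ (downs q ++ [true]) := by
      simp
    have hc : (ups p).count true + 1 = (downs p ++ [true]).count true + j + 1 := by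
      simp [count_ups, count_downs]
      omega
    rw [hd, hc, adj_append_of_ge,
      adj_reverse (k := q.count (some true)) (by rw [count_downs]; omega),
      adj_append_of_lt (by rw [count_ups, count_downs]; exact hlt), count_downs]
    refine ⟨Or.inr, ?_⟩
    rintro (⟨rfl, -⟩ | h)
    · simp at hlt
    · exact h

theorem mem_dyckL_two_iff_columns {n : ℕ} {w : List Bool} : w ∈ dyckL n 2 ↔
    ∃ p q, p.length + q.length + 2 = n ∧ IsMotzkinWord (p ++ q) ∧ w = wordOf (columns p q) ∧
      ((p = [] ∧ q = []) ∨ (Adj (p.count (some false)) (ups p) ∧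
        Adj ((mirror q).count (some false)) (ups (mirror q)))) := by
  rw [mem_dyckL_two_iff]
  constructor
  · rintro ⟨p, q, ⟨hn, hp, hq⟩, hc, rfl, hadj⟩
    obtain ⟨p, rfl⟩ := exists_map_column hp
    obtain ⟨q, rfl⟩ := exists_map_column hq
    have hm : IsMotzkinWord (p ++ q) := isDyckCols_columns_iff.1 hc
    exact ⟨p, q, by simpa using hn, hm, rfl, (adj_columns_iff hm).1 hadj⟩
  · rintro ⟨p, q, hn, hm, rfl, hadj⟩
    exact ⟨p.map column, q.map column,
      ⟨by simpa using hn, notMem_map_column p, notMem_map_column q⟩,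
      isDyckCols_columns_iff.2 hm, rfl, (adj_columns_iff hm).2 hadj⟩

theorem columns_injective {p q p' q' : List (Option Bool)} (e : columns p q = columns p' q') :
    p = p' ∧ q = q' := by
  have hp := eq_of_starred_eq (notMem_map_column p) (notMem_map_column q) (by simp) e
  obtain rfl := List.map_injective_iff.2 column_injective hp
  refine ⟨rfl, List.map_injective_iff.2 column_injective ?_⟩
  simpa [columns, starred] using e

/-- Insert an up step directly after the `j`-th up step (at the start if `j = 0`). -/
def insertUp : ℕ → List (Option Bool) → List (Option Bool)
  | 0, p => some true :: p
  | _ + 1, [] => []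
  | j + 1, z :: p => z :: insertUp (if z = some true then j else j + 1) p

theorem exists_insertUp {j : ℕ} {p : List (Option Bool)} (h : j ≤ p.count (some true)) :
    ∃ a b, p = a ++ b ∧ insertUp j p = a ++ some true :: b ∧ a.count (some true) = j := by
  induction p generalizing j with
  | nil => exact ⟨[], [], rfl, by simp_all [insertUp], by simp_all⟩
  | cons z p ih =>
    rcases j with _ | j
    · exact ⟨[], z :: p, rfl, rfl, rfl⟩
    · by_cases hz : z = some true
      · subst hz
        obtain ⟨a, b, rfl, e, rfl⟩ := ih (j := j) (by simpa using h)
        exact ⟨some true :: a, b, rfl, by simp [insertUp, e], by simp⟩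
      · rw [List.count_cons_of_ne hz] at h
        obtain ⟨a, b, rfl, e, ha⟩ := ih h
        exact ⟨z :: a, b, rfl, by simp [insertUp, e, hz], by rwa [List.count_cons_of_ne hz]⟩

theorem insertUp_injective {j : ℕ} {p p' : List (Option Bool)} (h : j ≤ p.count (some true))
    (h' : j ≤ p'.count (some true)) (e : insertUp j p = insertUp j p') : p = p' := by
  induction p generalizing j p' with
  | nil =>
    obtain rfl : j = 0 := by simpa using h
    simpa [insertUp] using e
  | cons z p ih =>
    rcases j with _ | j
    · simpa [insertUp] using e
    · rcases p' with _ | ⟨z', p'⟩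
      · simp at h'
      · simp only [insertUp, List.cons.injEq] at e
        obtain ⟨rfl, e⟩ := e
        rw [ih (p' := p') ?_ ?_ e]
        · split_ifs with hz <;> simp_all
        · split_ifs with hz <;> simp_all

theorem adj_ups_iff {j : ℕ} {p : List (Option Bool)} :
    Adj j (ups p) ↔ ∃ p', j ≤ p'.count (some true) ∧ insertUp j p' = p := by
  induction p generalizing j with
  | nil =>
    refine iff_of_false (by simp [ups, Adj]) ?_
    rintro ⟨p, hp, e⟩
    obtain ⟨a, b, -, e', -⟩ := exists_insertUp hp
    simp [e'] at e
  | cons z p ih =>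
    rcases j with _ | j
    · rcases z with _ | _ | _ <;> simp [ups, column, Adj, insertUp]
    · have hz : Adj (j + 1) (ups (z :: p)) ↔ Adj (if z = some true then j else j + 1) (ups p) := by
        rcases z with _ | _ | _ <;> simp [ups, column, Adj]
      rw [hz, ih]
      constructor
      · rintro ⟨p', h, rfl⟩
        refine ⟨z :: p', ?_, rfl⟩
        split_ifs at h with hz <;> simp_all
      · rintro ⟨_ | ⟨z', p'⟩, h, e⟩
        · simp at h
        · simp only [insertUp, List.cons.injEq] at e
          obtain ⟨rfl, rfl⟩ := e
          refine ⟨p', ?_, rfl⟩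
          split_ifs with hz <;> simp_all

/-- Raise a prefix of a Motzkin path by one up step. -/
def raise (p : List (Option Bool)) : List (Option Bool) := insertUp (p.count (some false)) p

section Raise

variable {p p' : List (Option Bool)}

theorem IsMotzkinPrefix.count_le (h : IsMotzkinPrefix p) :
    p.count (some false) ≤ p.count (some true) :=
  h p List.prefix_rfl

theorem IsMotzkinPrefix.count_raise (h : IsMotzkinPrefix p) :
    (raise p).count (some false) = p.count (some false) ∧
      (raise p).count (some true) = p.count (some true) + 1 ∧
      (raise p).length = p.length + 1 := by
  obtain ⟨a, b, e, e', -⟩ := exists_insertUp h.count_le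
  rw [raise, e', e]
  simp [add_assoc]

theorem isMotzkinPrefix_raise_iff (h : p.count (some false) ≤ p.count (some true)) :
    IsMotzkinPrefix (raise p) ↔ IsMotzkinPrefix p := by
  obtain ⟨a, b, e, e', ha⟩ := exists_insertUp h
  rw [raise, e', e]
  simp only [IsMotzkinPrefix, forall_prefix_append, forall_prefix_cons]
  simp only [e, List.count_append, List.append_nil] at ha ⊢
  refine and_congr_right fun _ => ?_
  constructor
  · intro hb l hl
    have := hl.sublist.count_le (some false)
    omega
  · refine fun hb => ⟨hb [] List.nil_prefix, fun l hl => ?_⟩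
    have := hb l hl
    simp
    omega

theorem raise_injective (h : IsMotzkinPrefix p) (h' : IsMotzkinPrefix p')
    (e : raise p = raise p') : p = p' := by
  have hc : p.count (some false) = p'.count (some false) := by
    rw [← h.count_raise.1, e, h'.count_raise.1]
  refine insertUp_injective h.count_le (hc ▸ h'.count_le) ?_
  rw [raise, raise, ← hc] at e
  exact e

theorem isMotzkinPrefix_and_adj_iff :
    (IsMotzkinPrefix p ∧ Adj (p.count (some false)) (ups p)) ↔
      ∃ p', IsMotzkinPrefix p' ∧ raise p' = p := by
  constructor
  · rintro ⟨h, hadj⟩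
    obtain ⟨p', hp', e⟩ := adj_ups_iff.1 hadj
    have hc : p.count (some false) = p'.count (some false) := by
      obtain ⟨a, b, e₁, e₂, -⟩ := exists_insertUp hp'
      rw [← e, e₂, e₁]
      simp
    rw [hc] at hp' e
    exact ⟨p', (isMotzkinPrefix_raise_iff hp').1 (by rwa [raise, e]), e⟩
  · rintro ⟨p', h, rfl⟩
    refine ⟨(isMotzkinPrefix_raise_iff h.count_le).2 h, adj_ups_iff.2 ⟨p', ?_, ?_⟩⟩
    · rw [h.count_raise.1]
      exact h.count_le
    · rw [h.count_raise.1, raise]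

end Raise

theorem length_mirror (p : List (Option Bool)) : (mirror p).length = p.length := by
  simp [mirror]

theorem isMotzkinWord_append_mirror_iff {p q : List (Option Bool)} :
    IsMotzkinWord (p ++ mirror q) ↔
      p.count (some false) + q.count (some true) = p.count (some true) + q.count (some false) ∧
        IsMotzkinPrefix p ∧ IsMotzkinPrefix q := by
  rw [isMotzkinWord_append_iff, mirror_mirror]
  simp [count_mirror]

theorem isMotzkinWord_raise_iff {p q : List (Option Bool)} (hp : IsMotzkinPrefix p)
    (hq : IsMotzkinPrefix q) :
    IsMotzkinWord (raise p ++ mirror (raise q)) ↔ IsMotzkinWord (p ++ mirror q) := by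
  rw [isMotzkinWord_append_mirror_iff, isMotzkinWord_append_mirror_iff,
    isMotzkinPrefix_raise_iff hp.count_le, isMotzkinPrefix_raise_iff hq.count_le,
    hp.count_raise.1, hp.count_raise.2.1, hq.count_raise.1, hq.count_raise.2.1]
  refine and_congr_left' ?_
  omega

theorem mem_dyckL_two_iff_raise {n : ℕ} {w : List Bool} : w ∈ dyckL n 2 ↔
    (n = 2 ∧ w = wordOf (columns [] [])) ∨
      ∃ p q, p.length + q.length + 4 = n ∧ IsMotzkinWord (p ++ mirror q) ∧
        w = wordOf (columns (raise p) (mirror (raise q))) := by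
  rw [mem_dyckL_two_iff_columns]
  constructor
  · rintro ⟨p, q, hn, hm, rfl, ⟨rfl, rfl⟩ | ⟨hap, haq⟩⟩
    · exact Or.inl ⟨hn.symm, rfl⟩
    · obtain ⟨-, hp', hq'⟩ := isMotzkinWord_append_iff.1 hm
      obtain ⟨p, hp, rfl⟩ := isMotzkinPrefix_and_adj_iff.1 ⟨hp', hap⟩
      obtain ⟨r, hr, e⟩ := isMotzkinPrefix_and_adj_iff.1 ⟨hq', haq⟩
      obtain rfl : mirror (raise r) = q := by rw [e, mirror_mirror]
      refine Or.inr ⟨p, r, ?_, (isMotzkinWord_raise_iff hp hr).1 hm, rfl⟩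
      rw [length_mirror, hp.count_raise.2.2, hr.count_raise.2.2] at hn
      omega
  · rintro (⟨rfl, rfl⟩ | ⟨p, q, hn, hm, rfl⟩)
    · exact ⟨[], [], rfl, by simp [IsMotzkinWord], rfl, Or.inl ⟨rfl, rfl⟩⟩
    · obtain ⟨-, hp, hq⟩ := isMotzkinWord_append_mirror_iff.1 hm
      refine ⟨_, _, ?_, (isMotzkinWord_raise_iff hp hq).2 hm, rfl, Or.inr ⟨?_, ?_⟩⟩
      · rw [length_mirror, hp.count_raise.2.2, hq.count_raise.2.2]
        omega
      · exact (isMotzkinPrefix_and_adj_iff.2 ⟨p, hp, rfl⟩).2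
      · rw [mirror_mirror]
        exact (isMotzkinPrefix_and_adj_iff.2 ⟨q, hq, rfl⟩).2

/-- The Dyck path with `L = 2` obtained from a Motzkin path cut after `k` steps. -/
def ofMotzkin (z : List (Option Bool) × ℕ) : List Bool :=
  wordOf (columns (raise (z.1.take z.2)) (mirror (raise (mirror (z.1.drop z.2)))))

theorem dyckL_two_eq_image (N : ℕ) :
    dyckL (N + 4) 2 = ofMotzkin '' ({w | w.length = N ∧ IsMotzkinWord w} ×ˢ Set.Iic N) := by
  ext w
  rw [mem_dyckL_two_iff_raise]
  constructor
  · rintro (⟨hn, -⟩ | ⟨p, q, hn, hm, rfl⟩)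
    · omega
    · refine ⟨(p ++ mirror q, p.length), ⟨⟨?_, hm⟩, ?_⟩, ?_⟩
      · rw [List.length_append, length_mirror]
        omega
      · simp only [Set.mem_Iic]
        omega
      · simp [ofMotzkin, mirror_mirror]
  · rintro ⟨⟨v, k⟩, ⟨⟨hv, hm⟩, hk⟩, rfl⟩
    simp only [Set.mem_Iic] at hv hm hk
    refine Or.inr ⟨v.take k, mirror (v.drop k), ?_, ?_, rfl⟩
    · rw [length_mirror, List.length_take, List.length_drop]
      omega
    · rwa [mirror_mirror, List.take_append_drop]

theorem ofMotzkin_injOn (N : ℕ) :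
    Set.InjOn ofMotzkin ({w | w.length = N ∧ IsMotzkinWord w} ×ˢ Set.Iic N) := by
  rintro ⟨v, k⟩ ⟨⟨hv, hm⟩, hk⟩ ⟨v', k'⟩ ⟨⟨hv', hm'⟩, hk'⟩ e
  simp only [Set.mem_Iic] at hv hm hk hv' hm' hk'
  rw [← List.take_append_drop k v, ← mirror_mirror (v.drop k)] at hm
  rw [← List.take_append_drop k' v', ← mirror_mirror (v'.drop k')] at hm'
  obtain ⟨-, hp, hq⟩ := isMotzkinWord_append_mirror_iff.1 hm
  obtain ⟨-, hp', hq'⟩ := isMotzkinWord_append_mirror_iff.1 hm'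
  obtain ⟨e₁, e₂⟩ := columns_injective <| wordOf_injective
    (isDyckCols_columns_iff.2 ((isMotzkinWord_raise_iff hp hq).2 hm))
    (isDyckCols_columns_iff.2 ((isMotzkinWord_raise_iff hp' hq').2 hm')) e
  have e₁ := raise_injective hp hp' e₁
  have e₂ := raise_injective hq hq' (Function.LeftInverse.injective mirror_mirror e₂)
  have e₂ := Function.LeftInverse.injective mirror_mirror e₂
  have hl := congrArg List.length e₁
  rw [List.length_take, List.length_take] at hl
  refine Prod.ext ?_ ?_
  · change v = v'
    rw [← List.take_append_drop k v, e₁, e₂, List.take_append_drop]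
  · change k = k'
    omega

theorem ncard_dyckL_two_add_four (N : ℕ) : (dyckL (N + 4) 2).ncard = motzkin N * (N + 1) := by
  rw [dyckL_two_eq_image, (ofMotzkin_injOn N).ncard_image, Set.ncard_prod, motzkin]
  congr 1
  rw [← Finset.coe_Iic, Set.ncard_coe_finset, Nat.card_Iic]

theorem ncard_dyckL_two_two : (dyckL 2 2).ncard = 1 := by
  rw [Set.ncard_eq_one]
  refine ⟨wordOf (columns [] []), ?_⟩
  ext w
  rw [mem_dyckL_two_iff_raise]
  constructor
  · rintro (⟨-, rfl⟩ | ⟨p, q, hn, -⟩)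
    · rfl
    · omega
  · rintro rfl
    exact Or.inl ⟨rfl, rfl⟩

theorem dyckL_two_eq_empty {n : ℕ} (hn : n < 4) (h2 : n ≠ 2) : dyckL n 2 = ∅ := by
  refine Set.eq_empty_iff_forall_notMem.2 fun w hw => ?_
  rcases mem_dyckL_two_iff_raise.1 hw with ⟨h, -⟩ | ⟨p, q, h, -⟩ <;> omega

end Interlace

open PowerSeries in
/-- **Theorem (generating function for L = 2).**
`L₂(x) = Σ |𝒟ₙ²| xⁿ = x² + x⁴·(x·m(x))′`. -/
theorem dyck_L_eq_two_gf :
    PowerSeries.mk (fun n => ((dyckL n 2).ncard : ℚ)) =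
      X ^ 2 + X ^ 4 * PowerSeries.derivative ℚ (X * motzkinGF) := by
  ext n
  rw [coeff_mk, map_add, coeff_X_pow]
  rcases lt_or_ge n 4 with hn | hn
  · rw [coeff_X_pow_mul', if_neg (Nat.not_le.2 hn), add_zero]
    split_ifs with h2
    · rw [h2, Interlace.ncard_dyckL_two_two, Nat.cast_one]
    · rw [Interlace.dyckL_two_eq_empty hn h2, Set.ncard_empty, Nat.cast_zero]
  · obtain ⟨N, rfl⟩ := Nat.exists_eq_add_of_le' hn
    rw [Interlace.ncard_dyckL_two_add_four, if_neg (by omega), zero_add, coeff_X_pow_mul,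
      coeff_derivative, coeff_succ_X_mul, motzkinGF, coeff_mk]
    push_cast
    rfl
end
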